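/- arXiv:1707.04778 — 3 statements merged into one kernel-verified Lean document; each statement's English description precedes it below -/
import Mathlib

section
/- Let X be a Polish space, Ω = C([0,∞) → X) with the compact-open topology, ℱ its Borel σ-algebra, (ℱ_t) the natural filtration, θ_s the shift, Ω_x = {w : w(0)=x}, and 𝒫 the space of Borel probability measures on Ω with the weak topology. Let 𝒞 : X → 2^𝒫 satisfy: (C1) 𝒞(x) is a nonempty compact convex subset of 𝒫 for every x; (C2) {x ∈ X : 𝒞(x) ∩ K ≠ ∅} is Borel for every closed K ⊆ 𝒫; (C3) P(Ω_x) = 1 for every P ∈ 𝒞(x); (MP1) for every x, P ∈ 𝒞(x), and s ≥ 0, the regular conditional probability satisfies P[θ_s^{-1}(·)|ℱ_s](w) ∈ 𝒞(w(s)) for P-almost all w; (MP2) for every s ≥ 0 and every ℱ_s-measurable selection Q of w ↦ 𝒞(w(s)), if P ∈ 𝒞(x) then P ⊗_s Q ∈ 𝒞(x). Then there exists a measurable selection x ↦ P_x ∈ 𝒞(x) such that for every x and every s ≥ 0, P_x[θ_s^{-1}(·)|ℱ_s](w) = P_{w(s)}(·) for P_x-almost all w. -/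
open MeasureTheory Set
open scoped NNReal

noncomputable section

/-- The space `Ω = C([0,∞) → X)` with the compact-open topology. -/
abbrev IPath (X : Type*) [TopologicalSpace X] : Type _ := C(ℝ≥0, X)

variable {X : Type*} [TopologicalSpace X]

/-- The shift `θ_s : w(·) ↦ w(s + ·)`. -/
def shift (s : ℝ≥0) (w : IPath X) : IPath X :=
  w.comp ⟨fun t => s + t, by fun_prop⟩

/-- The Borel σ-algebra `ℱ` on the path space. -/
instance : MeasurableSpace (IPath X) := borel _
instance : BorelSpace (IPath X) := ⟨rfl⟩

/-- The natural filtration `ℱ_s` on path space. -/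
def natF (X : Type*) [TopologicalSpace X] [MeasurableSpace X] (s : ℝ≥0) :
    MeasurableSpace (IPath X) :=
  ⨆ t ∈ Iic s, MeasurableSpace.comap (fun w : IPath X => w t) inferInstance

/-- Convexity of a set of probability measures: it is stable under convex
combinations `a • P + b • Q`, `a + b = 1`. -/
def ConvexMeasSet {Ω' : Type*} [MeasurableSpace Ω']
    (C : Set (ProbabilityMeasure Ω')) : Prop :=
  ∀ P ∈ C, ∀ Q ∈ C, ∀ a b : ℝ≥0, a + b = 1 →
    ∀ R : ProbabilityMeasure Ω',
      (R : Measure Ω') = a • (P : Measure Ω') + b • (Q : Measure Ω') → R ∈ C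

section helpers

set_option linter.unusedSectionVars false
set_option linter.style.haveILetI false

variable [PolishSpace X] [MeasurableSpace X] [BorelSpace X]

lemma polish_path : PolishSpace (IPath X) := by
  letI := TopologicalSpace.upgradeIsCompletelyMetrizable X
  letI : UniformSpace (IPath X) := inferInstance
  haveI : CompleteSpace (IPath X) := inferInstance
  haveI : (uniformity (IPath X)).IsCountablyGenerated := inferInstance
  haveI : SecondCountableTopology (IPath X) := inferInstance
  infer_instance

lemma measurable_of_eval {Ω' : Type*} [MeasurableSpace Ω'] {g : Ω' → IPath X}
    (h : ∀ t, Measurable fun a => g a t) : Measurable g := by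
  haveI : PolishSpace (IPath X) := polish_path
  obtain ⟨D, hDc, hDd⟩ := TopologicalSpace.exists_countable_dense ℝ≥0
  haveI := hDc.to_subtype
  let e : IPath X → (D → X) := fun w d => w d
  have he : MeasurableEmbedding e := by
    apply Measurable.measurableEmbedding
    · refine measurable_pi_lambda _ fun d => ?_
      exact (ContinuousEvalConst.continuous_eval_const (d : ℝ≥0)).measurable
    · intro w v hwv
      apply ContinuousMap.coe_injective
      refine Continuous.ext_on hDd w.continuous v.continuous ?_
      intro d hd
      exact congrFun hwv ⟨d, hd⟩
  rw [← he.measurable_comp_iff]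
  exact measurable_pi_lambda _ fun d => h d

lemma measurable_eval (t : ℝ≥0) : Measurable fun w : IPath X => w t :=
  (ContinuousEvalConst.continuous_eval_const t).measurable

lemma measurable_shift (s : ℝ≥0) : Measurable (shift (X := X) s) :=
  measurable_of_eval fun t => measurable_eval (s + t)

lemma natF_le (s : ℝ≥0) : natF X s ≤ (inferInstance : MeasurableSpace (IPath X)) := by
  refine iSup₂_le fun t _ => ?_
  exact (measurable_eval t).comap_le

lemma measurable_eval_natF {s t : ℝ≥0} (h : t ≤ s) :
    Measurable[natF X s] fun w : IPath X => w t := by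
  rw [measurable_iff_comap_le]
  exact le_iSup₂_of_le (f := fun t (_ : t ∈ Iic s) =>
    MeasurableSpace.comap (fun w : IPath X => w t) inferInstance) t h le_rfl

/-- The stopped path. -/
def stopP (s : ℝ≥0) (w : IPath X) : IPath X :=
  w.comp ⟨fun t => min t s, by fun_prop⟩

lemma measurable_stopP (s : ℝ≥0) : Measurable[natF X s] (stopP (X := X) s) :=
  @measurable_of_eval X _ _ _ _ _ (natF X s) _
    fun t => measurable_eval_natF (min_le_right t s)

lemma natF_eq (s : ℝ≥0) : natF X s =
    MeasurableSpace.comap (stopP (X := X) s) inferInstance := by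
  apply le_antisymm
  · refine iSup₂_le fun t ht => ?_
    have : (fun w : IPath X => w t) = (fun w : IPath X => w t) ∘ stopP s := by
      funext w; simp [stopP, min_eq_left (show t ≤ s from ht)]
    rw [this, ← MeasurableSpace.comap_comp]
    exact MeasurableSpace.comap_mono (measurable_eval t).comap_le
  · exact (measurable_stopP s).comap_le

/-- The gluing of two paths at time `s`. -/
def glue (s : ℝ≥0) (p : IPath X × IPath X) : IPath X := by
  classical
  exact if h : p.1 s = p.2 0 then
    ⟨fun t => if t ≤ s then p.1 t else p.2 (t - s), by
      refine Continuous.if_le p.1.continuous ?_ continuous_id continuous_const ?_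
      · exact p.2.continuous.comp (continuous_id.sub continuous_const)
      · rintro t rfl; simpa using h⟩
  else p.1

lemma glue_apply (s t : ℝ≥0) (p : IPath X × IPath X) (h : p.1 s = p.2 0) :
    glue s p t = if t ≤ s then p.1 t else p.2 (t - s) := by
  simp [glue, h]

lemma glue_apply_neg (s t : ℝ≥0) (p : IPath X × IPath X) (h : ¬ p.1 s = p.2 0) :
    glue s p t = p.1 t := by
  simp [glue, h]

lemma measurable_glue (s : ℝ≥0) : Measurable (glue (X := X) s) := by
  classical
  refine measurable_of_eval fun t => ?_
  have : (fun p : IPath X × IPath X => glue s p t) = fun p =>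
      if p.1 s = p.2 0 then (if t ≤ s then p.1 t else p.2 (t - s)) else p.1 t := by
    funext p
    split_ifs with h h2
    · rw [glue_apply s t p h, if_pos h2]
    · rw [glue_apply s t p h, if_neg h2]
    · rw [glue_apply_neg s t p h]
  rw [this]
  refine Measurable.ite ?_ ?_ ((measurable_eval t).comp measurable_fst)
  · exact measurableSet_eq_fun ((measurable_eval s).comp measurable_fst)
      ((measurable_eval 0).comp measurable_snd)
  · by_cases h : t ≤ s
    · simp only [h, if_true]; exact (measurable_eval t).comp measurable_fst
    · simp only [h, if_false]; exact (measurable_eval (t - s)).comp measurable_snd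

lemma stopP_glue (s : ℝ≥0) (p : IPath X × IPath X) : stopP s (glue s p) = stopP s p.1 := by
  ext t
  simp only [stopP, ContinuousMap.comp_apply, ContinuousMap.coe_mk]
  by_cases h : p.1 s = p.2 0
  · rw [glue_apply _ _ _ h, if_pos (min_le_right _ _)]
  · rw [glue_apply_neg _ _ _ h]

lemma shift_glue (s : ℝ≥0) (p : IPath X × IPath X) (h : p.1 s = p.2 0) :
    shift s (glue s p) = p.2 := by
  ext t
  simp only [shift, ContinuousMap.comp_apply, ContinuousMap.coe_mk]
  rw [glue_apply _ _ _ h]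
  split_ifs with h2
  · have : t = 0 := by simpa using h2
    subst this; simpa using h
  · simp

/-- Borel measurability in the sense of the statement. -/
lemma measurable_coe_of_open {Ω' : Type*} {m : MeasurableSpace Ω'}
    {Q : Ω' → ProbabilityMeasure (IPath X)}
    (hQ : ∀ U : Set (ProbabilityMeasure (IPath X)), IsOpen U → MeasurableSet (Q ⁻¹' U)) :
    Measurable fun w => (Q w : Measure (IPath X)) := by
  haveI : PolishSpace (IPath X) := polish_path
  letI := TopologicalSpace.metrizableSpaceMetric (IPath X)
  letI : MeasurableSpace (ProbabilityMeasure (IPath X)) := borel _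
  haveI : BorelSpace (ProbabilityMeasure (IPath X)) := ⟨rfl⟩
  have hQm : Measurable[_, borel _] Q := measurable_of_isOpen hQ
  refine Measurable.measure_of_isPiSystem_of_isProbabilityMeasure
    (S := {F | IsClosed F}) (borel_eq_generateFrom_isClosed (α := IPath X)) isPiSystem_isClosed ?_
  intro F hF
  have hF : IsClosed F := hF
  have hlim : ∀ w, Filter.Tendsto (fun n => ∫⁻ v, (hF.apprSeq n v : ENNReal) ∂(Q w : Measure (IPath X)))
      Filter.atTop (nhds ((Q w : Measure (IPath X)) F)) := fun w =>
    HasOuterApproxClosed.tendsto_lintegral_apprSeq hF _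
  refine measurable_of_tendsto_metrizable (f := fun n w =>
    ∫⁻ v, (hF.apprSeq n v : ENNReal) ∂(Q w : Measure (IPath X))) (fun n => ?_)
    (tendsto_pi_nhds.2 hlim)
  have hc : Continuous fun P : ProbabilityMeasure (IPath X) =>
      ∫⁻ v, (hF.apprSeq n v : ENNReal) ∂(P : Measure (IPath X)) := by
    rw [continuous_iff_continuousAt]
    intro P
    exact (ProbabilityMeasure.tendsto_iff_forall_lintegral_tendsto.1 Filter.tendsto_id) _
  exact hc.measurable.comp hQm

/-- The maximizers of a functional. -/
def argmaxC {Y T : Type*} (C : Y → Set T) (φ : T → ℝ) : Y → Set T :=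
  fun x => {P | P ∈ C x ∧ ∀ P' ∈ C x, φ P' ≤ φ P}

/-- Nonempty compact valued measurable multifunctions. -/
structure CGood {Y T : Type*} [MeasurableSpace Y] [TopologicalSpace T] (C : Y → Set T) : Prop where
  ne : ∀ x, (C x).Nonempty
  cpt : ∀ x, IsCompact (C x)
  meas : ∀ K : Set T, IsClosed K → MeasurableSet {x | (C x ∩ K).Nonempty}

lemma CGood.argmax {Y T : Type*} [MeasurableSpace Y] [TopologicalSpace T] [T2Space T]
    {C : Y → Set T} (hC : CGood C) {φ : T → ℝ} (hφ : Continuous φ) : CGood (argmaxC C φ) := by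
  have key : ∀ x (K : Set T), IsClosed K → ((argmaxC C φ x ∩ K).Nonempty ↔
      ∀ q : ℚ, (C x ∩ {P | (q : ℝ) ≤ φ P}).Nonempty →
        (C x ∩ (K ∩ {P | (q : ℝ) ≤ φ P})).Nonempty) := by
    intro x K hK
    constructor
    · rintro ⟨P, ⟨hP, hmax⟩, hPK⟩ q ⟨P', hP', hq⟩
      exact ⟨P, hP, hPK, le_trans hq (hmax P' hP')⟩
    · intro h
      obtain ⟨M, hM, hMmax⟩ := (hC.cpt x).exists_isMaxOn (hC.ne x) hφ.continuousOn
      have hMmax : ∀ P' ∈ C x, φ P' ≤ φ M := fun P' hP' => hMmax hP'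
      have hcK : IsCompact (C x ∩ K) := (hC.cpt x).inter_right hK
      have hneK : (C x ∩ K).Nonempty := by
        obtain ⟨q, hq⟩ := exists_rat_lt (φ M)
        obtain ⟨P, h1, h2, _⟩ := h q ⟨M, hM, hq.le⟩
        exact ⟨P, h1, h2⟩
      obtain ⟨N, ⟨hN, hNK⟩, hNmax⟩ := hcK.exists_isMaxOn hneK hφ.continuousOn
      refine ⟨N, ⟨hN, fun P' hP' => (hMmax P' hP').trans ?_⟩, hNK⟩
      by_contra hlt
      push Not at hlt
      obtain ⟨q, hq1, hq2⟩ := exists_rat_btwn hlt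
      obtain ⟨P, h1, h2, h3⟩ := h q ⟨M, hM, hq2.le⟩
      have h4 : φ P ≤ φ N := hNmax (show P ∈ C x ∩ K from ⟨h1, h2⟩)
      have h3 : (q : ℝ) ≤ φ P := h3
      linarith
  have hcl : ∀ q : ℝ, IsClosed {P | q ≤ φ P} := fun q => isClosed_le continuous_const hφ
  refine ⟨fun x => ?_, fun x => ?_, fun K hK => ?_⟩
  · obtain ⟨M, hM, hMmax⟩ := (hC.cpt x).exists_isMaxOn (hC.ne x) hφ.continuousOn
    exact ⟨M, hM, fun P' hP' => hMmax hP'⟩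
  · have : argmaxC C φ x = C x ∩ ⋂ P' ∈ C x, {P | φ P' ≤ φ P} := by
      ext P; simp [argmaxC]
    rw [this]
    exact (hC.cpt x).inter_right (isClosed_biInter fun P' _ => hcl _)
  · simp_rw [key _ K hK, ofPred_forall]
    refine MeasurableSet.iInter fun q => ?_
    have h1 := hC.meas _ (hcl q)
    have h2 := hC.meas _ (hK.inter (hcl q))
    have : {x | (C x ∩ {P | (q : ℝ) ≤ φ P}).Nonempty →
        (C x ∩ (K ∩ {P | (q : ℝ) ≤ φ P})).Nonempty} =
        {x | (C x ∩ {P | (q : ℝ) ≤ φ P}).Nonempty}ᶜ ∪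
        {x | (C x ∩ (K ∩ {P | (q : ℝ) ≤ φ P})).Nonempty} := by
      ext x; simp only [mem_ofPred_eq, mem_union, mem_compl_iff]; tauto
    rw [this]
    exact h1.compl.union h2

/-- Iterated maximization. -/
def iterC {Y T : Type*} (C : Y → Set T) (φ : ℕ → T → ℝ) : ℕ → Y → Set T
  | 0 => C
  | n + 1 => argmaxC (iterC C φ n) (φ n)

lemma iterC_anti {Y T : Type*} (C : Y → Set T) (φ : ℕ → T → ℝ) (x : Y) (n : ℕ) :
    iterC C φ (n + 1) x ⊆ iterC C φ n x := fun _ h => h.1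

lemma iterC_eq {Y T : Type*} (C : Y → Set T) (φ : ℕ → T → ℝ) (x : Y) {P P' : T}
    (h : P ∈ ⋂ n, iterC C φ n x) (h' : P' ∈ ⋂ n, iterC C φ n x) (n : ℕ) : φ n P = φ n P' := by
  have h1 := mem_iInter.1 h
  have h2 := mem_iInter.1 h'
  exact le_antisymm ((h2 (n + 1)).2 P (h1 n)) ((h1 (n + 1)).2 P' (h2 n))

lemma CGood.iter {Y T : Type*} [MeasurableSpace Y] [TopologicalSpace T] [T2Space T]
    {C : Y → Set T} (hC : CGood C) {φ : ℕ → T → ℝ} (hφ : ∀ n, Continuous (φ n)) (n : ℕ) :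
    CGood (iterC C φ n) := by
  induction n with
  | zero => exact hC
  | succ n ih => exact ih.argmax (hφ n)

lemma CGood.iInter {Y T : Type*} [MeasurableSpace Y] [TopologicalSpace T] [T2Space T]
    {C : Y → Set T} (hC : CGood C) {φ : ℕ → T → ℝ} (hφ : ∀ n, Continuous (φ n)) :
    CGood (fun x => ⋂ n, iterC C φ n x) := by
  have hg := hC.iter hφ
  have key : ∀ x (K : Set T), IsClosed K → (((⋂ n, iterC C φ n x) ∩ K).Nonempty ↔
      ∀ n, (iterC C φ n x ∩ K).Nonempty) := by
    intro x K hK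
    rw [iInter_inter]
    constructor
    · exact fun h n => h.mono (iInter_subset _ n)
    · intro h
      refine IsCompact.nonempty_iInter_of_sequence_nonempty_isCompact_isClosed _
        (fun n => inter_subset_inter_left _ (iterC_anti C φ x n)) h
        (((hg 0).cpt x).inter_right hK) (fun n => (((hg n).cpt x).inter_right hK).isClosed)
  refine ⟨fun x => ?_, fun x => ?_, fun K hK => ?_⟩
  · have := (key x univ isClosed_univ).2 (fun n => by simpa using (hg n).ne x)
    simpa using this
  · exact (hC.cpt x).of_isClosed_subset (isClosed_iInter fun n => ((hg n).cpt x).isClosed)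
      (iInter_subset _ 0)
  · simp_rw [key _ K hK, ofPred_forall]
    exact MeasurableSet.iInter fun n => (hg n).meas K hK

lemma CGood.measurable_of_singleton {Y T : Type*} [MeasurableSpace Y] [TopologicalSpace T]
    {C : Y → Set T} (hC : CGood C) {sel : Y → T} (hs : ∀ x, C x = {sel x}) (U : Set T)
    (hU : IsOpen U) : MeasurableSet (sel ⁻¹' U) := by
  have h := (hC.meas Uᶜ hU.isClosed_compl).compl
  convert h using 1
  ext x
  simp [hs]

lemma CGood.exists_sel {Y T : Type*} [MeasurableSpace Y] [TopologicalSpace T] [T2Space T]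
    {C : Y → Set T} (hC : CGood C) {φ : ℕ → T → ℝ} (hφ : ∀ n, Continuous (φ n))
    (hsep : ∀ P P', (∀ n, φ n P = φ n P') → P = P') :
    ∃ sel : Y → T, (∀ U, IsOpen U → MeasurableSet (sel ⁻¹' U)) ∧ ∀ x, sel x ∈ C x := by
  have hI := hC.iInter hφ
  choose sel hsel using hI.ne
  refine ⟨sel, hI.measurable_of_singleton fun x => ?_, fun x => mem_iInter.1 (hsel x) 0⟩
  refine Subset.antisymm (fun P hP => ?_) (singleton_subset_iff.2 (hsel x))
  exact hsep _ _ fun n => iterC_eq C φ x hP (hsel x) n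

/-- A countable separating family of bounded continuous functions. -/
lemma sep_family (Y : Type*) [TopologicalSpace Y] [PolishSpace Y] [MeasurableSpace Y]
    [BorelSpace Y] : ∃ f : ℕ → BoundedContinuousFunction Y ℝ≥0, (∀ n y, f n y ≤ 1) ∧
      ∀ μ ν : Measure Y, IsProbabilityMeasure μ → IsProbabilityMeasure ν →
        (∀ n, ∫⁻ y, (f n y : ENNReal) ∂μ = ∫⁻ y, (f n y : ENNReal) ∂ν) → μ = ν := by
  classical
  letI := TopologicalSpace.metrizableSpaceMetric Y
  let B := TopologicalSpace.countableBasis Y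
  haveI : Countable B := (TopologicalSpace.countable_countableBasis Y).to_subtype
  have hB := TopologicalSpace.isBasis_countableBasis Y
  let F : Finset B → Set Y := fun S => ⋂ b ∈ S, (b : Set Y)ᶜ
  have hF : ∀ S, IsClosed (F S) := fun S =>
    isClosed_biInter fun b _ => (hB.isOpen b.2).isClosed_compl
  obtain ⟨g, hg⟩ := exists_surjective_nat (Finset B × ℕ)
  let e : Finset B × ℕ → BoundedContinuousFunction Y ℝ≥0 := fun p => (hF p.1).apprSeq p.2
  refine ⟨fun n => e (g n), fun n y =>
    HasOuterApproxClosed.apprSeq_apply_le_one _ _ _, ?_⟩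
  intro μ ν hμ hν h
  have h' : ∀ S, μ (F S) = ν (F S) := by
    intro S
    refine tendsto_nhds_unique (HasOuterApproxClosed.tendsto_lintegral_apprSeq (hF S) μ) ?_
    convert HasOuterApproxClosed.tendsto_lintegral_apprSeq (hF S) ν using 2 with n
    obtain ⟨k, hk⟩ := hg (S, n)
    have : ∫⁻ y, (e (g k) y : ENNReal) ∂μ = ∫⁻ y, (e (g k) y : ENNReal) ∂ν := h k
    rw [hk] at this
    exact this
  refine ext_of_generate_finite (range F) ?_ ?_ ?_ (by simp)
  · rw [BorelSpace.measurable_eq (α := Y), hB.borel_eq_generateFrom]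
    apply le_antisymm
    · refine MeasurableSpace.generateFrom_le fun b hb => ?_
      have : MeasurableSet[MeasurableSpace.generateFrom (range F)] (F {⟨b, hb⟩}) :=
        MeasurableSpace.measurableSet_generateFrom ⟨_, rfl⟩
      have := this.compl
      have h2 : F {⟨b, hb⟩} = bᶜ := by
        simp only [F, Finset.mem_singleton, iInter_iInter_eq_left]
      rwa [h2, compl_compl] at this
    · refine MeasurableSpace.generateFrom_le ?_
      rintro _ ⟨S, rfl⟩
      refine Finset.measurableSet_biInter _ fun b _ => ?_
      exact (MeasurableSpace.measurableSet_generateFrom b.2).compl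
  · rintro _ ⟨S, rfl⟩ _ ⟨T, rfl⟩ _
    refine ⟨S ∪ T, ?_⟩
    ext y; simp only [F, mem_iInter, mem_inter_iff, Finset.mem_union]
    constructor
    · exact fun h => ⟨fun b hb => h b (Or.inl hb), fun b hb => h b (Or.inr hb)⟩
    · rintro ⟨h1, h2⟩ b (hb | hb)
      · exact h1 b hb
      · exact h2 b hb
  · rintro _ ⟨S, rfl⟩
    exact h' S

/-- Integration functionals. -/
def PhiF {Y : Type*} [MeasurableSpace Y] (H : Y → ENNReal)
    (P : ProbabilityMeasure Y) : ℝ := (∫⁻ w, H w ∂(P : Measure Y)).toReal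

lemma continuous_PhiF {Y : Type*} [TopologicalSpace Y] [MeasurableSpace Y]
    [OpensMeasurableSpace Y] (f : BoundedContinuousFunction Y ℝ≥0) :
    Continuous (PhiF fun w => (f w : ENNReal)) := by
  have := ProbabilityMeasure.continuous_testAgainstNN_eval f
  exact NNReal.continuous_coe.comp this

lemma lintegral_ne_top_of_le_one {Y : Type*} [MeasurableSpace Y] {H : Y → ENNReal}
    (hH : ∀ w, H w ≤ 1) (P : ProbabilityMeasure Y) : ∫⁻ w, H w ∂(P : Measure Y) ≠ ⊤ := by
  refine ne_top_of_le_ne_top ENNReal.one_ne_top ((lintegral_mono hH).trans ?_)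
  simp

lemma PhiF_le_iff {Y : Type*} [MeasurableSpace Y] {H : Y → ENNReal}
    (hH : ∀ w, H w ≤ 1) (P P' : ProbabilityMeasure Y) : PhiF H P ≤ PhiF H P' ↔
    ∫⁻ w, H w ∂(P : Measure Y) ≤ ∫⁻ w, H w ∂(P' : Measure Y) :=
  ENNReal.toReal_le_toReal (lintegral_ne_top_of_le_one hH P) (lintegral_ne_top_of_le_one hH P')

lemma exists_sel_path {C : X → Set (ProbabilityMeasure (IPath X))} (hC : CGood C) :
    ∃ sel : X → ProbabilityMeasure (IPath X),
      (∀ U, IsOpen U → MeasurableSet (sel ⁻¹' U)) ∧ ∀ x, sel x ∈ C x := by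
  haveI : PolishSpace (IPath X) := polish_path
  letI := TopologicalSpace.metrizableSpaceMetric (IPath X)
  obtain ⟨f, hf1, hf⟩ := sep_family (IPath X)
  refine hC.exists_sel (φ := fun n => PhiF fun w => (f n w : ENNReal))
    (fun n => continuous_PhiF _) ?_
  intro P P' h
  apply Subtype.ext
  refine hf _ _ P.2 P'.2 fun n => ?_
  have h1 : ∀ w, (f n w : ENNReal) ≤ 1 := fun w => by exact_mod_cast hf1 n w
  exact le_antisymm ((PhiF_le_iff h1 P P').1 (h n).le) ((PhiF_le_iff h1 P' P).1 (h n).ge)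

/-- `Q` is a regular conditional distribution of the shifted path given `natF X s`. -/
def Dis (s : ℝ≥0) (P : ProbabilityMeasure (IPath X))
    (Q : IPath X → ProbabilityMeasure (IPath X)) : Prop :=
  (∀ U : Set (ProbabilityMeasure (IPath X)), IsOpen U → MeasurableSet[natF X s] (Q ⁻¹' U)) ∧
  (∀ A : Set (IPath X), MeasurableSet[natF X s] A →
    ∀ B : Set (IPath X), MeasurableSet B →
      (P : Measure (IPath X)) (A ∩ shift s ⁻¹' B) =
        ∫⁻ w in A, (Q w : Measure (IPath X)) B ∂(P : Measure (IPath X)))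

lemma natF_meas_coe {s : ℝ≥0} {Q : IPath X → ProbabilityMeasure (IPath X)}
    (hQ : ∀ U : Set (ProbabilityMeasure (IPath X)), IsOpen U → MeasurableSet[natF X s] (Q ⁻¹' U)) :
    Measurable[natF X s] fun w => (Q w : Measure (IPath X)) :=
  @measurable_coe_of_open X _ _ _ _ _ (natF X s) Q hQ

lemma meas_of_natF {s : ℝ≥0} {β : Type*} [MeasurableSpace β] {g : IPath X → β}
    (h : Measurable[natF X s] g) : Measurable g := h.mono (natF_le s) le_rfl

lemma Dis.lintegral {s : ℝ≥0} {P : ProbabilityMeasure (IPath X)}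
    {Q : IPath X → ProbabilityMeasure (IPath X)} (h : Dis s P Q) {A : Set (IPath X)}
    (hA : MeasurableSet[natF X s] A) {H : IPath X → ENNReal} (hH : Measurable H) :
    ∫⁻ w in A, H (shift s w) ∂(P : Measure (IPath X)) =
      ∫⁻ w in A, ∫⁻ v, H v ∂(Q w : Measure (IPath X)) ∂(P : Measure (IPath X)) := by
  have hQm := meas_of_natF (natF_meas_coe h.1)
  have : ((P : Measure (IPath X)).restrict A).map (shift s) =
      ((P : Measure (IPath X)).restrict A).bind (fun w => (Q w : Measure (IPath X))) := by
    ext B hB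
    rw [Measure.map_apply (measurable_shift s) hB, Measure.bind_apply hB hQm.aemeasurable,
      Measure.restrict_apply (measurable_shift s hB), inter_comm]
    exact h.2 A hA B hB
  rw [← lintegral_map hH (measurable_shift s), this,
    Measure.lintegral_bind hQm.aemeasurable hH.aemeasurable]

lemma lintegral_eq_of_agree {s : ℝ≥0} {P R : ProbabilityMeasure (IPath X)}
    (h : ∀ A : Set (IPath X), MeasurableSet[natF X s] A →
      (R : Measure (IPath X)) A = (P : Measure (IPath X)) A)
    {G : IPath X → ENNReal} (hG : Measurable[natF X s] G) :
    ∫⁻ w, G w ∂(R : Measure (IPath X)) = ∫⁻ w, G w ∂(P : Measure (IPath X)) := by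
  have : (R : Measure (IPath X)).trim (natF_le s) = (P : Measure (IPath X)).trim (natF_le s) := by
    refine @Measure.ext _ (natF X s) _ _ fun A hA => ?_
    rw [trim_measurableSet_eq (natF_le s) hA, trim_measurableSet_eq (natF_le s) hA, h A hA]
  rw [← lintegral_trim (natF_le s) hG, this, lintegral_trim (natF_le s) hG]

lemma lintegral_restrict_eq_of_agree {s : ℝ≥0} {P R : ProbabilityMeasure (IPath X)}
    (h : ∀ A : Set (IPath X), MeasurableSet[natF X s] A →
      (R : Measure (IPath X)) A = (P : Measure (IPath X)) A)
    {G : IPath X → ENNReal} (hG : Measurable[natF X s] G) {A : Set (IPath X)}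
    (hA : MeasurableSet[natF X s] A) :
    ∫⁻ w in A, G w ∂(R : Measure (IPath X)) = ∫⁻ w in A, G w ∂(P : Measure (IPath X)) := by
  rw [← lintegral_indicator (natF_le s _ hA), ← lintegral_indicator (natF_le s _ hA)]
  exact lintegral_eq_of_agree h (hG.indicator hA)

lemma exists_glue (s : ℝ≥0) (P : ProbabilityMeasure (IPath X))
    (Q : IPath X → ProbabilityMeasure (IPath X))
    (hQ : ∀ U : Set (ProbabilityMeasure (IPath X)), IsOpen U → MeasurableSet[natF X s] (Q ⁻¹' U))
    (hQ0 : ∀ w, (Q w : Measure (IPath X)) {v : IPath X | v 0 = w s} = 1) :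
    ∃ R : ProbabilityMeasure (IPath X), (∀ A : Set (IPath X), MeasurableSet[natF X s] A →
      (R : Measure (IPath X)) A = (P : Measure (IPath X)) A) ∧ Dis s R Q := by
  have hQm' := natF_meas_coe hQ
  have hQm := meas_of_natF hQm'
  let κ : ProbabilityTheory.Kernel (IPath X) (IPath X) := ⟨fun w => (Q w : Measure (IPath X)), hQm⟩
  haveI : ProbabilityTheory.IsMarkovKernel κ := ⟨fun w => (Q w).2⟩
  let M : Measure (IPath X × IPath X) := (P : Measure (IPath X)).compProd κ
  have hRp : IsProbabilityMeasure (M.map (glue s)) :=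
    Measure.isProbabilityMeasure_map (measurable_glue s).aemeasurable
  have hgA : ∀ A : Set (IPath X), MeasurableSet[natF X s] A → glue s ⁻¹' A = A ×ˢ univ := by
    intro A hA
    rw [natF_eq] at hA
    obtain ⟨B, _, rfl⟩ := hA
    ext p
    simp [stopP_glue]
  have hcl : MeasurableSet {p : IPath X × IPath X | p.1 s = p.2 0} :=
    measurableSet_eq_fun ((measurable_eval s).comp measurable_fst)
      ((measurable_eval 0).comp measurable_snd)
  have hae : ∀ᵐ p ∂M, p.1 s = p.2 0 := by
    refine (Measure.ae_compProd_iff hcl).2 (Filter.Eventually.of_forall fun w => ?_)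
    have hm : MeasurableSet {v : IPath X | v 0 = w s} :=
      measurable_eval 0 (measurableSet_singleton _)
    have := (prob_compl_eq_zero_iff (μ := (Q w : Measure (IPath X))) hm).2 (hQ0 w)
    rw [ae_iff]
    have h2 : {v : IPath X | ¬ w s = v 0} = {v : IPath X | v 0 = w s}ᶜ := by
      ext v
      exact not_congr eq_comm
    change (Q w : Measure (IPath X)) {v : IPath X | ¬ w s = v 0} = 0
    rw [h2, this]
  have hagree : ∀ A : Set (IPath X), MeasurableSet[natF X s] A →
      (M.map (glue s)) A = (P : Measure (IPath X)) A := by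
    intro A hA
    rw [Measure.map_apply (measurable_glue s) (natF_le s _ hA), hgA A hA,
      Measure.compProd_apply_prod (natF_le s _ hA) MeasurableSet.univ]
    simp
  refine ⟨⟨M.map (glue s), hRp⟩, hagree, hQ, fun A hA B hB => ?_⟩
  have hfin := lintegral_restrict_eq_of_agree (P := P) (R := ⟨M.map (glue s), hRp⟩) hagree
    ((Measure.measurable_coe hB).comp hQm') hA
  refine Eq.trans ?_ hfin.symm
  change (M.map (glue s)) (A ∩ shift s ⁻¹' B) = _
  rw [Measure.map_apply (measurable_glue s) ((natF_le s _ hA).inter (measurable_shift s hB)),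
    preimage_inter, hgA A hA]
  have : M ((A ×ˢ univ) ∩ glue s ⁻¹' (shift s ⁻¹' B)) = M (A ×ˢ B) := by
    apply measure_congr
    filter_upwards [hae] with p hp
    apply propext
    change (p ∈ A ×ˢ univ ∧ shift s (glue s p) ∈ B) ↔ p ∈ A ×ˢ B
    rw [shift_glue s p hp]
    simp [mem_prod]
  rw [this, Measure.compProd_apply_prod (natF_le s _ hA) hB]
  rfl

/-- The inductive hypothesis in the iteration. -/
structure MGood (C0 C : X → Set (ProbabilityMeasure (IPath X))) : Prop where
  good : CGood C
  sub : ∀ x, C x ⊆ C0 x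
  mp1 : ∀ x, ∀ P ∈ C x, ∀ s Q, Dis s P Q →
    (∀ᵐ w ∂(P : Measure (IPath X)), Q w ∈ C0 (w s)) →
    ∀ᵐ w ∂(P : Measure (IPath X)), Q w ∈ C (w s)
  mp2 : ∀ x, ∀ P ∈ C x, ∀ s Q, (∀ w, Q w ∈ C (w s)) → ∀ R : ProbabilityMeasure (IPath X),
    (∀ A : Set (IPath X), MeasurableSet[natF X s] A →
      (R : Measure (IPath X)) A = (P : Measure (IPath X)) A) → Dis s R Q → R ∈ C x

lemma MGood.step {C0 C : X → Set (ProbabilityMeasure (IPath X))} (hC : MGood C0 C)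
    (hC3 : ∀ x, ∀ P ∈ C0 x, (P : Measure (IPath X)) {w : IPath X | w 0 = x} = 1)
    (hMP1 : ∀ x, ∀ P ∈ C0 x, ∀ s, ∃ Q, Dis s P Q ∧
      ∀ᵐ w ∂(P : Measure (IPath X)), Q w ∈ C0 (w s))
    {H : IPath X → ENNReal} (hH : Measurable H) (hH1 : ∀ w, H w ≤ 1)
    (hcont : Continuous (PhiF H))
    (hdec : ∀ s : ℝ≥0, ∃ (G : IPath X → ENNReal) (c : ENNReal), c ≠ 0 ∧ c ≠ ⊤ ∧
      Measurable[natF X s] G ∧ ∀ w, H w = G w + c * H (shift s w)) :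
    MGood C0 (argmaxC C (PhiF H)) := by
  haveI : PolishSpace (IPath X) := polish_path
  letI := TopologicalSpace.metrizableSpaceMetric (IPath X)
  have hint : ∀ (s : ℝ≥0) (G : IPath X → ENNReal) (c : ENNReal), c ≠ ⊤ →
      Measurable[natF X s] G → (∀ w, H w = G w + c * H (shift s w)) →
      ∀ P Q, Dis s P Q → ∫⁻ w, H w ∂(P : Measure (IPath X)) = ∫⁻ w, G w ∂(P : Measure (IPath X)) +
        c * ∫⁻ w, ∫⁻ v, H v ∂(Q w : Measure (IPath X)) ∂(P : Measure (IPath X)) := by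
    intro s G c hc hG hHG P Q hPQ
    have h1 := hPQ.lintegral MeasurableSet.univ hH
    simp only [Measure.restrict_univ] at h1
    rw [← h1, ← lintegral_const_mul' c _ hc, ← lintegral_add_left (meas_of_natF hG)]
    exact lintegral_congr hHG
  have hmeasv : ∀ s (Q : IPath X → ProbabilityMeasure (IPath X)),
      (∀ U : Set (ProbabilityMeasure (IPath X)), IsOpen U → MeasurableSet[natF X s] (Q ⁻¹' U)) →
      Measurable[natF X s] fun w => ∫⁻ v, H v ∂(Q w : Measure (IPath X)) := fun s Q hQ =>
    (Measure.measurable_lintegral hH).comp (natF_meas_coe hQ)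
  refine ⟨hC.good.argmax hcont, fun x P hP => hC.sub x hP.1, ?_, ?_⟩
  · intro x P hP s Q hPQ hQ0
    have hQC := hC.mp1 x P hP.1 s Q hPQ hQ0
    obtain ⟨sel, hselm, hsel⟩ := exists_sel_path (hC.good.argmax hcont)
    have hSm : ∀ U : Set (ProbabilityMeasure (IPath X)), IsOpen U →
        MeasurableSet[natF X s] ((fun w : IPath X => sel (w s)) ⁻¹' U) := fun U hU =>
      measurable_eval_natF le_rfl (hselm U hU)
    obtain ⟨R, hRP, hR⟩ := exists_glue s P (fun w => sel (w s)) hSm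
      (fun w => hC3 _ _ (hC.sub _ (hsel _).1))
    have hRC : R ∈ C x := hC.mp2 x P hP.1 s _ (fun w => (hsel _).1) R hRP hR
    have hle := (PhiF_le_iff hH1 _ _).1 (hP.2 R hRC)
    obtain ⟨G, c, hc0, hct, hG, hHG⟩ := hdec s
    have hGfin : ∫⁻ w, G w ∂(P : Measure (IPath X)) ≠ ⊤ :=
      lintegral_ne_top_of_le_one (fun w => le_trans (by rw [hHG w]; exact le_self_add) (hH1 w)) P
    rw [hint s G c hct hG hHG R _ hR, hint s G c hct hG hHG P Q hPQ,
      lintegral_eq_of_agree hRP hG, lintegral_eq_of_agree hRP (hmeasv s _ hSm),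
      ENNReal.add_le_add_iff_left hGfin, ENNReal.mul_le_mul_iff_right hc0 hct] at hle
    have hvle : ∀ᵐ w ∂(P : Measure (IPath X)), ∫⁻ v, H v ∂(Q w : Measure (IPath X)) ≤
        ∫⁻ v, H v ∂(sel (w s) : Measure (IPath X)) := by
      filter_upwards [hQC] with w hw
      exact (PhiF_le_iff hH1 _ _).1 ((hsel (w s)).2 _ hw)
    have hvfin : ∫⁻ w, ∫⁻ v, H v ∂(Q w : Measure (IPath X)) ∂(P : Measure (IPath X)) ≠ ⊤ :=
      lintegral_ne_top_of_le_one (fun w => (lintegral_mono hH1).trans (by simp)) P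
    have heq := ae_eq_of_ae_le_of_lintegral_le hvle hvfin
      (meas_of_natF (hmeasv s _ hSm)).aemeasurable hle
    filter_upwards [hQC, heq] with w hw hw2
    refine ⟨hw, fun P' hP' => ((hsel (w s)).2 P' hP').trans ?_⟩
    exact (PhiF_le_iff hH1 _ _).2 (le_of_eq hw2.symm)
  · intro x P hP s Q hQ R hRP hR
    have hRC : R ∈ C x := hC.mp2 x P hP.1 s _ (fun w => (hQ w).1) R hRP hR
    refine ⟨hRC, fun P' hP' => (hP.2 P' hP').trans ?_⟩
    rw [PhiF_le_iff hH1]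
    obtain ⟨Q', hPQ', hQ'0⟩ := hMP1 x P (hC.sub x hP.1) s
    have hQ'C := hC.mp1 x P hP.1 s Q' hPQ' hQ'0
    obtain ⟨G, c, hc0, hct, hG, hHG⟩ := hdec s
    rw [hint s G c hct hG hHG R _ hR, hint s G c hct hG hHG P Q' hPQ',
      lintegral_eq_of_agree hRP hG, lintegral_eq_of_agree hRP (hmeasv s _ hR.1)]
    refine add_le_add le_rfl (mul_le_mul' le_rfl (lintegral_mono_ae ?_))
    filter_upwards [hQ'C] with w hw
    exact (PhiF_le_iff hH1 _ _).1 ((hQ w).2 _ hw)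

/-- The exponential weight. -/
def wexp (k : ℕ) (t : ℝ) : ENNReal := ENNReal.ofReal (Real.exp (-(((k : ℝ) + 1) * t)))

lemma measurable_wexp (k : ℕ) : Measurable (wexp k) := by
  unfold wexp; fun_prop

lemma wexp_add (k : ℕ) (s t : ℝ) : wexp k (s + t) = wexp k s * wexp k t := by
  unfold wexp
  rw [← ENNReal.ofReal_mul (Real.exp_nonneg _), ← Real.exp_add]
  congr 2; ring

lemma wexp_ne_zero (k : ℕ) (t : ℝ) : wexp k t ≠ 0 := by
  simp [wexp, Real.exp_pos]

lemma wexp_ne_top (k : ℕ) (t : ℝ) : wexp k t ≠ ⊤ := ENNReal.ofReal_ne_top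

lemma lintegral_wexp_zero : ∫⁻ t in Ici (0 : ℝ), wexp 0 t = 1 := by
  have h1 := integral_exp_neg_Ioi_zero
  have h2 : IntegrableOn (fun x : ℝ => Real.exp (-x)) (Ioi 0) := by
    simpa using integrableOn_exp_neg_Ioi 0
  have h3 := ofReal_integral_eq_lintegral_ofReal h2
    (Filter.Eventually.of_forall fun x => (Real.exp_nonneg _))
  rw [h1] at h3
  rw [setLIntegral_congr (Ioi_ae_eq_Ici (a := (0 : ℝ))).symm]
  simp only [wexp, Nat.cast_zero, zero_add, one_mul]
  rw [← h3]; simp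

lemma lintegral_wexp_le (k : ℕ) : ∫⁻ t in Ici (0 : ℝ), wexp k t ≤ 1 := by
  rw [← lintegral_wexp_zero]
  refine setLIntegral_mono (measurable_wexp 0) fun t ht => ?_
  have ht : 0 ≤ t := ht
  unfold wexp
  apply ENNReal.ofReal_le_ofReal
  apply Real.exp_le_exp.2
  have : 0 ≤ (k : ℝ) * t := by positivity
  simp; nlinarith

/-- The discounted occupation functional. -/
def lap (k : ℕ) (f : BoundedContinuousFunction X ℝ≥0) (w : IPath X) : ENNReal :=
  ∫⁻ t in Ici (0 : ℝ), wexp k t * (f (w t.toNNReal) : ENNReal)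

lemma measurable_fw (f : BoundedContinuousFunction X ℝ≥0) (w : IPath X) :
    Measurable fun t : ℝ => (f (w t.toNNReal) : ENNReal) := by
  have : Continuous fun t : ℝ => f (w t.toNNReal) :=
    f.continuous.comp (w.continuous.comp continuous_real_toNNReal)
  exact (ENNReal.continuous_coe.comp this).measurable

lemma lap_le_one (k : ℕ) {f : BoundedContinuousFunction X ℝ≥0} (hf : ∀ x, f x ≤ 1)
    (w : IPath X) : lap k f w ≤ 1 := by
  refine le_trans (lintegral_mono fun t => ?_) (lintegral_wexp_le k)
  refine mul_le_of_le_one_right' ?_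
  exact ENNReal.coe_le_one_iff.2 (hf (w t.toNNReal))

lemma continuous_lap (k : ℕ) {f : BoundedContinuousFunction X ℝ≥0} (hf : ∀ x, f x ≤ 1) :
    Continuous (lap k f) := by
  haveI : PolishSpace (IPath X) := polish_path
  rw [continuous_iff_continuousAt]
  intro w
  refine tendsto_lintegral_filter_of_dominated_convergence (wexp k) ?_ ?_ ?_ ?_
  · exact Filter.Eventually.of_forall fun v => (measurable_wexp k).mul (measurable_fw f v)
  · refine Filter.Eventually.of_forall fun v => Filter.Eventually.of_forall fun t => ?_
    refine mul_le_of_le_one_right' ?_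
    exact_mod_cast hf (v t.toNNReal)
  · exact ne_top_of_le_ne_top ENNReal.one_ne_top (lintegral_wexp_le k)
  · refine Filter.Eventually.of_forall fun t => ?_
    refine ENNReal.Tendsto.const_mul ?_ (Or.inr (wexp_ne_top k t))
    refine (ENNReal.continuous_coe.tendsto _).comp ((f.continuous.tendsto _).comp ?_)
    exact (ContinuousEvalConst.continuous_eval_const (F := IPath X) t.toNNReal).tendsto w

lemma continuous_PhiF_lap (k : ℕ) {f : BoundedContinuousFunction X ℝ≥0} (hf : ∀ x, f x ≤ 1) :
    Continuous (PhiF (lap k f)) := by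
  have hfin : ∀ w, lap k f w ≠ ⊤ := fun w =>
    ne_top_of_le_ne_top ENNReal.one_ne_top (lap_le_one k hf w)
  have hc : Continuous fun w => (lap k f w).toNNReal := by
    rw [continuous_iff_continuousAt]
    intro w
    exact (ENNReal.tendsto_toNNReal (hfin w)).comp (continuous_lap k hf).continuousAt
  have hle : ∀ w, (lap k f w).toNNReal ≤ 1 := fun w => by
    have := ENNReal.toNNReal_mono ENNReal.one_ne_top (lap_le_one k hf w)
    simpa using this
  let g : BoundedContinuousFunction (IPath X) ℝ≥0 :=
    BoundedContinuousFunction.mkOfBound ⟨fun w => (lap k f w).toNNReal, hc⟩ 1 (by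
      intro x y
      rw [NNReal.dist_eq, abs_le]
      have h1 : ((lap k f x).toNNReal : ℝ) ≤ 1 := by exact_mod_cast hle x
      have h2 : ((lap k f y).toNNReal : ℝ) ≤ 1 := by exact_mod_cast hle y
      have h3 := (lap k f x).toNNReal.coe_nonneg
      have h4 := (lap k f y).toNNReal.coe_nonneg
      simp only [ContinuousMap.coe_mk]
      constructor <;> linarith)
  have : lap k f = fun w => (g w : ENNReal) := by
    funext w
    exact (ENNReal.coe_toNNReal (hfin w)).symm
  rw [this]
  exact continuous_PhiF g

lemma lap_dec (k : ℕ) {f : BoundedContinuousFunction X ℝ≥0} (hf : ∀ x, f x ≤ 1) (s : ℝ≥0) :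
    ∃ (G : IPath X → ENNReal) (c : ENNReal), c ≠ 0 ∧ c ≠ ⊤ ∧
      Measurable[natF X s] G ∧ ∀ w, lap k f w = G w + c * lap k f (shift s w) := by
  haveI : PolishSpace (IPath X) := polish_path
  let G0 : IPath X → ENNReal := fun w =>
    ∫⁻ t in Ico (0 : ℝ) s, wexp k t * (f (w t.toNNReal) : ENNReal)
  have hG0 : Measurable G0 := by
    have hj : Measurable fun p : IPath X × ℝ => wexp k p.2 * (f (p.1 p.2.toNNReal) : ENNReal) := by
      refine ((measurable_wexp k).comp measurable_snd).mul ?_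
      have : Continuous fun p : IPath X × ℝ => f (p.1 p.2.toNNReal) := by
        refine f.continuous.comp ?_
        exact continuous_fst.eval (continuous_real_toNNReal.comp continuous_snd)
      exact (ENNReal.continuous_coe.comp this).measurable
    exact hj.lintegral_prod_right'
  refine ⟨fun w => G0 (stopP s w), wexp k s, wexp_ne_zero _ _, wexp_ne_top _ _,
    hG0.comp (measurable_stopP s), fun w => ?_⟩
  have hsplit : Ici (0 : ℝ) = Ico (0 : ℝ) s ∪ Ici (s : ℝ) := (Ico_union_Ici_eq_Ici s.2).symm
  have h1 : lap k f w = G0 w + ∫⁻ t in Ici (s : ℝ), wexp k t * (f (w t.toNNReal) : ENNReal) := by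
    unfold lap
    rw [hsplit, lintegral_union measurableSet_Ici]
    rw [Set.disjoint_left]
    intro t ht ht'
    exact absurd ht.2 (not_lt.2 ht')
  have h2 : G0 (stopP s w) = G0 w := by
    refine setLIntegral_congr_fun measurableSet_Ico fun t ht => ?_
    have h3 : min t.toNNReal s = t.toNNReal := min_eq_left (Real.toNNReal_le_iff_le_coe.2 ht.2.le)
    simp [stopP, h3]
  have h3 : ∫⁻ t in Ici (s : ℝ), wexp k t * (f (w t.toNNReal) : ENNReal) =
      wexp k s * lap k f (shift s w) := by
    unfold lap
    rw [← lintegral_const_mul' _ _ (wexp_ne_top _ _), ← lintegral_indicator measurableSet_Ici,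
      ← lintegral_indicator measurableSet_Ici, ← lintegral_add_left_eq_self _ (s : ℝ)]
    refine lintegral_congr fun t => ?_
    by_cases ht : 0 ≤ t
    · rw [indicator_of_mem (show (s : ℝ) + t ∈ Ici (s : ℝ) by simpa using ht),
        indicator_of_mem (show t ∈ Ici (0 : ℝ) from ht), wexp_add, mul_assoc]
      have h5 : ((s : ℝ) + t).toNNReal = s + t.toNNReal := by
        rw [Real.toNNReal_add s.coe_nonneg ht, Real.toNNReal_coe]
      rw [h5]
      rfl
    · rw [indicator_of_notMem (show (s : ℝ) + t ∉ Ici (s : ℝ) by simpa using ht),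
        indicator_of_notMem (show t ∉ Ici (0 : ℝ) from ht)]
  change lap k f w = G0 (stopP s w) + _
  rw [h1, h2, h3]

/-- The one-dimensional marginal functional. -/
lemma lap_fubini (k : ℕ) (f : BoundedContinuousFunction X ℝ≥0)
    (P : ProbabilityMeasure (IPath X)) :
    ∫⁻ w, lap k f w ∂(P : Measure (IPath X)) = ∫⁻ t in Ici (0 : ℝ), wexp k t *
      ∫⁻ w, (f (w t.toNNReal) : ENNReal) ∂(P : Measure (IPath X)) := by
  haveI : PolishSpace (IPath X) := polish_path
  have hj : Measurable fun p : IPath X × ℝ => wexp k p.2 * (f (p.1 p.2.toNNReal) : ENNReal) := by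
    refine ((measurable_wexp k).comp measurable_snd).mul ?_
    have : Continuous fun p : IPath X × ℝ => f (p.1 p.2.toNNReal) := by
      refine f.continuous.comp ?_
      exact continuous_fst.eval (continuous_real_toNNReal.comp continuous_snd)
    exact (ENNReal.continuous_coe.comp this).measurable
  unfold lap
  rw [lintegral_lintegral_swap hj.aemeasurable]
  refine lintegral_congr fun t => ?_
  rw [lintegral_const_mul' _ _ (wexp_ne_top _ _)]

/-- Uniqueness of Laplace transforms of bounded continuous functions. -/
lemma laplace_unique {g g' : ℝ → ENNReal} (hg : Continuous g) (hg' : Continuous g')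
    (hg1 : ∀ t, g t ≤ 1) (hg1' : ∀ t, g' t ≤ 1)
    (h : ∀ k, ∫⁻ t in Ici (0 : ℝ), wexp k t * g t = ∫⁻ t in Ici (0 : ℝ), wexp k t * g' t) :
    ∀ t, 0 ≤ t → g t = g' t := by
  let m0 : Measure ℝ := volume.restrict (Ici 0)
  let M : (ℝ → ENNReal) → Measure ℝ := fun g => m0.withDensity fun t => wexp 0 t * g t
  have hmeas : ∀ g : ℝ → ENNReal, Continuous g → Measurable fun t => wexp 0 t * g t :=
    fun g hg => (measurable_wexp 0).mul hg.measurable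
  have hfin : ∀ g : ℝ → ENNReal, (∀ t, g t ≤ 1) → IsFiniteMeasure (M g) := by
    intro g hg1
    refine isFiniteMeasure_withDensity (ne_top_of_le_ne_top ENNReal.one_ne_top ?_)
    refine le_trans (lintegral_mono fun t => ?_) (lintegral_wexp_le 0)
    exact (mul_le_mul' le_rfl (hg1 t)).trans (mul_one _).le
  have hf1 := hfin g hg1
  have hf2 := hfin g' hg1'
  have hu : Continuous fun t : ℝ≥0 => Real.exp (-(t : ℝ)) := by fun_prop
  let u : BoundedContinuousFunction ℝ≥0 ℝ :=
    BoundedContinuousFunction.mkOfBound ⟨fun t : ℝ≥0 => Real.exp (-(t : ℝ)), hu⟩ 1 (by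
      intro x y
      rw [Real.dist_eq, abs_le]
      have h1 : Real.exp (-(x : ℝ)) ≤ 1 := Real.exp_le_one_iff.2 (by simp)
      have h2 : Real.exp (-(y : ℝ)) ≤ 1 := Real.exp_le_one_iff.2 (by simp)
      have h3 := Real.exp_pos (-(x : ℝ))
      have h4 := Real.exp_pos (-(y : ℝ))
      simp only [ContinuousMap.coe_mk]
      constructor <;> linarith)
  have hu_app : ∀ t, u t = Real.exp (-(t : ℝ)) := fun t => rfl
  let A : StarSubalgebra ℝ (BoundedContinuousFunction ℝ≥0 ℝ) :=
    { Algebra.adjoin ℝ {u} with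
      star_mem' := by
        intro a ha
        have : star a = a := by ext t; simp
        rwa [this] }
  have hmom : ∀ g : ℝ → ENNReal, Continuous g → ∀ k : ℕ,
      ∫ t, (u t) ^ k ∂((M g).map Real.toNNReal) =
      (∫⁻ t in Ici (0 : ℝ), wexp k t * g t).toReal := by
    intro g hg k
    rw [integral_eq_lintegral_of_nonneg_ae
      (f := fun t => u t ^ k)
      (Filter.Eventually.of_forall fun t => pow_nonneg (Real.exp_nonneg _) k)
      ((u.continuous.pow k).aestronglyMeasurable)]
    congr 1
    have hmu : Measurable fun t => ENNReal.ofReal (u t ^ k) :=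
      (ENNReal.continuous_ofReal.comp (u.continuous.pow k)).measurable
    have hmu2 : Measurable fun t : ℝ => ENNReal.ofReal (u t.toNNReal ^ k) :=
      hmu.comp continuous_real_toNNReal.measurable
    rw [lintegral_map hmu continuous_real_toNNReal.measurable]
    refine (lintegral_withDensity_eq_lintegral_mul m0 (hmeas g hg) hmu2).trans ?_
    refine setLIntegral_congr_fun measurableSet_Ici fun t ht => ?_
    have ht : 0 ≤ t := ht
    simp only [Pi.mul_apply, hu_app, Real.coe_toNNReal t ht]
    have : wexp k t = wexp 0 t * ENNReal.ofReal (Real.exp (-t) ^ k) := by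
      unfold wexp
      rw [← ENNReal.ofReal_mul (Real.exp_nonneg _), ← Real.exp_nat_mul, ← Real.exp_add]
      congr 2; push_cast; ring
    rw [this]; ring
  have hmap : (M g).map Real.toNNReal = (M g').map Real.toNNReal := by
    haveI : IsFiniteMeasure ((M g).map Real.toNNReal) := Measure.isFiniteMeasure_map _ _
    haveI : IsFiniteMeasure ((M g').map Real.toNNReal) := Measure.isFiniteMeasure_map _ _
    refine ext_of_forall_mem_subalgebra_integral_eq_of_polish (𝕜 := ℝ) (A := A) ?_ ?_
    · intro x y hxy
      refine ⟨fun t => u t, ⟨BoundedContinuousFunction.toContinuousMapStarₐ ℝ u, ?_, rfl⟩, ?_⟩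
      · exact ⟨u, Algebra.subset_adjoin (mem_singleton u), rfl⟩
      · intro h
        apply hxy
        have : Real.exp (-(x : ℝ)) = Real.exp (-(y : ℝ)) := h
        have := Real.exp_injective this
        exact NNReal.coe_injective (neg_injective this)
    · intro b hb
      replace hb : b ∈ Algebra.adjoin ℝ {u} := hb
      rw [Algebra.adjoin_singleton_eq_range_aeval] at hb
      obtain ⟨p, rfl⟩ := hb
      simp only [AlgHom.toRingHom_eq_coe, RingHom.coe_coe]
      induction p using Polynomial.induction_on' with
      | add p q hp hq =>
        simp only [map_add, BoundedContinuousFunction.coe_add, Pi.add_apply]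
        rw [integral_add (BoundedContinuousFunction.integrable _ _)
          (BoundedContinuousFunction.integrable _ _),
          integral_add (BoundedContinuousFunction.integrable _ _)
          (BoundedContinuousFunction.integrable _ _), hp, hq]
      | monomial n a =>
        have : ∀ t, (Polynomial.aeval u (Polynomial.monomial n a)) t = a * (u t) ^ n := by
          intro t
          rw [Polynomial.aeval_monomial, ← Algebra.smul_def]
          simp
        simp only [this]
        rw [integral_const_mul, integral_const_mul, hmom g hg, hmom g' hg', h]
  have hM : ∀ g, M g = ((M g).map Real.toNNReal).map (fun t : ℝ≥0 => (t : ℝ)) := by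
    intro g
    rw [Measure.map_map NNReal.continuous_coe.measurable continuous_real_toNNReal.measurable]
    have : (fun t : ℝ≥0 => (t : ℝ)) ∘ Real.toNNReal =ᵐ[M g] id := by
      have h1 : M g ≪ m0 := withDensity_absolutelyContinuous _ _
      refine h1.ae_le ?_
      filter_upwards [ae_restrict_mem (measurableSet_Ici (a := (0 : ℝ)))] with t ht
      exact Real.coe_toNNReal t ht
    rw [Measure.map_congr this, Measure.map_id]
  have hMM : M g = M g' := by rw [hM g, hM g', hmap]
  have hae := (withDensity_eq_iff_of_sigmaFinite (hmeas g hg).aemeasurable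
    (hmeas g' hg').aemeasurable).1 hMM
  have hae' : g =ᵐ[m0] g' := by
    filter_upwards [hae] with t ht
    exact (ENNReal.mul_right_inj (wexp_ne_zero 0 t) (wexp_ne_top 0 t)).1 ht
  have := Measure.eqOn_of_ae_eq hae' hg.continuousOn hg'.continuousOn
    (by rw [interior_Ici, closure_Ioi])
  exact fun t ht => this ht

lemma marginal_unique {f : BoundedContinuousFunction X ℝ≥0} (hf : ∀ x, f x ≤ 1)
    (P P' : ProbabilityMeasure (IPath X))
    (h : ∀ k, PhiF (lap k f) P = PhiF (lap k f) P') (t : ℝ≥0) :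
    ∫⁻ w, (f (w t) : ENNReal) ∂(P : Measure (IPath X)) =
      ∫⁻ w, (f (w t) : ENNReal) ∂(P' : Measure (IPath X)) := by
  haveI : PolishSpace (IPath X) := polish_path
  have hf' : ∀ x, (f x : ENNReal) ≤ 1 := fun x => by exact_mod_cast hf x
  have hcont : ∀ P : ProbabilityMeasure (IPath X), Continuous fun t : ℝ =>
      ∫⁻ w, (f (w t.toNNReal) : ENNReal) ∂(P : Measure (IPath X)) := by
    intro P
    rw [continuous_iff_continuousAt]
    intro t
    refine tendsto_lintegral_filter_of_dominated_convergence (fun _ => 1) ?_ ?_ (by simp) ?_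
    · refine Filter.Eventually.of_forall fun r => ?_
      exact (ENNReal.continuous_coe.comp f.continuous).measurable.comp (measurable_eval _)
    · exact Filter.Eventually.of_forall fun r => Filter.Eventually.of_forall fun w => hf' _
    · refine Filter.Eventually.of_forall fun w => ?_
      have : Continuous fun t : ℝ => f (w t.toNNReal) :=
        f.continuous.comp (w.continuous.comp continuous_real_toNNReal)
      exact (ENNReal.continuous_coe.comp this).tendsto t
  have hle : ∀ (P : ProbabilityMeasure (IPath X)) (t : ℝ),
      ∫⁻ w, (f (w t.toNNReal) : ENNReal) ∂(P : Measure (IPath X)) ≤ 1 := fun P t =>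
    (lintegral_mono fun w => hf' _).trans (by simp)
  have := laplace_unique (hcont P) (hcont P') (hle P) (hle P') (fun k => by
    rw [← lap_fubini, ← lap_fubini]
    exact le_antisymm ((PhiF_le_iff (lap_le_one k hf) P P').1 (h k).le)
      ((PhiF_le_iff (lap_le_one k hf) P' P).1 (h k).ge)) t t.2
  simpa using this

lemma fdd_unique {D : X → Set (ProbabilityMeasure (IPath X))} (hD : CGood D)
    (hmarg : ∀ x, ∀ P ∈ D x, ∀ P' ∈ D x, ∀ t, (P : Measure (IPath X)).map (fun w => w t) =
      (P' : Measure (IPath X)).map (fun w => w t))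
    (hMP : ∀ x, ∀ P ∈ D x, ∀ s, ∃ Q, Dis s P Q ∧
      ∀ᵐ w ∂(P : Measure (IPath X)), Q w ∈ D (w s))
    (A : ℝ≥0 → Set X) (hA : ∀ t, MeasurableSet (A t)) (S : Finset ℝ≥0) :
    ∀ c, (∀ t ∈ S, c ≤ t) → ∀ x, ∀ P ∈ D x, ∀ P' ∈ D x,
      (P : Measure (IPath X)) {w | ∀ t ∈ S, w (t - c) ∈ A t} =
      (P' : Measure (IPath X)) {w | ∀ t ∈ S, w (t - c) ∈ A t} := by
  obtain ⟨sel, hselm, hsel⟩ := exists_sel_path hD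
  have hselm' := measurable_coe_of_open hselm
  induction S using Finset.induction_on_min with
  | empty => intro c _ x P _ P' _; simp
  | insert a S ha ih =>
    intro c hc x P hP P' hP'
    have hca : c ≤ a := hc a (Finset.mem_insert_self a S)
    let E : Set (IPath X) := {w | ∀ t ∈ S, w (t - a) ∈ A t}
    have hE : MeasurableSet E := by
      have : E = ⋂ t ∈ S, (fun w : IPath X => w (t - a)) ⁻¹' A t := by
        ext w; simp [E]
      rw [this]
      exact Finset.measurableSet_biInter _ fun t _ => measurable_eval _ (hA t)
    have hset : {w : IPath X | ∀ t ∈ insert a S, w (t - c) ∈ A t} =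
        ((fun w : IPath X => w (a - c)) ⁻¹' A a) ∩ shift (a - c) ⁻¹' E := by
      ext w
      simp only [Finset.forall_mem_insert, E]
      refine and_congr Iff.rfl (forall₂_congr fun t ht => ?_)
      have h1 : a - c + (t - a) = t - c := by
        rw [add_comm]; exact tsub_add_tsub_cancel (ha t ht).le hca
      change _ ↔ w (a - c + (t - a)) ∈ A t
      rw [h1]
    have hval : ∀ P ∈ D x, (P : Measure (IPath X)) {w | ∀ t ∈ insert a S, w (t - c) ∈ A t} =
        ∫⁻ y in A a, (sel y : Measure (IPath X)) E
          ∂((P : Measure (IPath X)).map fun w => w (a - c)) := by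
      intro P hP
      obtain ⟨Q, hPQ, hQ⟩ := hMP x P hP (a - c)
      have hmE : Measurable fun y => (sel y : Measure (IPath X)) E :=
        (Measure.measurable_coe hE).comp hselm'
      rw [hset, hPQ.2 _ (measurable_eval_natF le_rfl (hA a)) E hE,
        setLIntegral_map (hA a) hmE (measurable_eval _)]
      refine lintegral_congr_ae (ae_restrict_of_ae ?_)
      filter_upwards [hQ] with w hw
      exact ih a (fun t ht => (ha t ht).le) _ _ hw _ (hsel _)
    rw [hval P hP, hval P' hP', hmarg x P hP P' hP']

lemma path_measure_ext {P P' : ProbabilityMeasure (IPath X)}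
    (h : ∀ (A : ℝ≥0 → Set X), (∀ t, MeasurableSet (A t)) → ∀ S : Finset ℝ≥0,
      (P : Measure (IPath X)) {w | ∀ t ∈ S, w t ∈ A t} =
      (P' : Measure (IPath X)) {w | ∀ t ∈ S, w t ∈ A t}) : P = P' := by
  have hm : Measurable fun (w : IPath X) (t : ℝ≥0) => w t :=
    measurable_pi_lambda _ fun t => measurable_eval t
  have hcomap : (inferInstance : MeasurableSpace (IPath X)) =
      MeasurableSpace.comap (fun (w : IPath X) (t : ℝ≥0) => w t) MeasurableSpace.pi := by
    apply le_antisymm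
    · have : @Measurable _ _ (MeasurableSpace.comap (fun (w : IPath X) (t : ℝ≥0) => w t)
          MeasurableSpace.pi) _ (id : IPath X → IPath X) := by
        refine @measurable_of_eval X _ _ _ _ _ (_) id fun t => ?_
        exact (measurable_pi_apply t).comp (comap_measurable _)
      exact fun B hB => this hB
    · exact hm.comap_le
  have hmap : (P : Measure (IPath X)).map (fun (w : IPath X) (t : ℝ≥0) => w t) =
      (P' : Measure (IPath X)).map (fun (w : IPath X) (t : ℝ≥0) => w t) := by
    haveI := Measure.isProbabilityMeasure_map (μ := (P : Measure (IPath X))) hm.aemeasurable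
    haveI := Measure.isProbabilityMeasure_map (μ := (P' : Measure (IPath X))) hm.aemeasurable
    refine ext_of_generate_finite _ (generateFrom_squareCylinders (α := fun _ : ℝ≥0 => X)).symm
      (isPiSystem_squareCylinders (fun _ => MeasurableSpace.isPiSystem_measurableSet)
        fun _ => MeasurableSet.univ) ?_ (by simp)
    rintro _ ⟨S, A, hA, rfl⟩
    have hA' : ∀ t, MeasurableSet (A t) := fun t => hA t (mem_univ t)
    have hms : MeasurableSet ((S : Set ℝ≥0).pi A) :=
      MeasurableSet.pi S.countable_toSet fun t _ => hA' t
    rw [Measure.map_apply hm hms, Measure.map_apply hm hms]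
    exact h A hA' S
  apply Subtype.ext
  refine Measure.ext fun B hB => ?_
  have hB' := hB
  rw [show (instMeasurableSpaceIPath : MeasurableSpace (IPath X)) = _ from hcomap] at hB'
  obtain ⟨B', hB', rfl⟩ := hB'
  change (P : Measure (IPath X)) _ = (P' : Measure (IPath X)) _
  rw [← Measure.map_apply hm hB', ← Measure.map_apply hm hB', hmap]

end helpers

/-- **Markov selection theorem.**  Let `𝒞 : X → 2^𝒫` have nonempty compact convex
values (C1), be measurable (C2), with `P(Ω_x) = 1` for `P ∈ 𝒞(x)` (C3).  If the
regular conditional probability distributions of members of `𝒞(x)` lie in `𝒞(w(s))`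
(MP1), and `𝒞` is stable under the products `P ⊗_s Q` (MP2), then `𝒞` has a
measurable selection `x ↦ P_x` with the Markov property
`P_x[θ_s⁻¹(·) | ℱ_s](w) = P_{w(s)}(·)` for `P_x`-a.e. `w`. -/
theorem markov_selection
    {X : Type*} [TopologicalSpace X] [PolishSpace X] [MeasurableSpace X] [BorelSpace X]
    (C : X → Set (ProbabilityMeasure (IPath X)))
    (hC1 : ∀ x, (C x).Nonempty ∧ IsCompact (C x) ∧ ConvexMeasSet (C x))
    (hC2 : ∀ K : Set (ProbabilityMeasure (IPath X)), IsClosed K →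
      MeasurableSet {x | (C x ∩ K).Nonempty})
    (hC3 : ∀ x, ∀ P ∈ C x, (P : Measure (IPath X)) {w : IPath X | w 0 = x} = 1)
    (hMP1 : ∀ x, ∀ P ∈ C x, ∀ s : ℝ≥0,
      ∃ Q : IPath X → ProbabilityMeasure (IPath X),
        (∀ U : Set (ProbabilityMeasure (IPath X)), IsOpen U →
          MeasurableSet[natF X s] (Q ⁻¹' U)) ∧
        (∀ᵐ w ∂(P : Measure (IPath X)), Q w ∈ C (w s)) ∧
        (∀ A : Set (IPath X), MeasurableSet[natF X s] A →
          ∀ B : Set (IPath X), MeasurableSet B →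
            (P : Measure (IPath X)) (A ∩ shift s ⁻¹' B) =
              ∫⁻ w in A, (Q w : Measure (IPath X)) B ∂(P : Measure (IPath X))))
    (hMP2 : ∀ x, ∀ P ∈ C x, ∀ s : ℝ≥0,
      ∀ Q : IPath X → ProbabilityMeasure (IPath X),
        (∀ U : Set (ProbabilityMeasure (IPath X)), IsOpen U →
          MeasurableSet[natF X s] (Q ⁻¹' U)) →
        (∀ w, Q w ∈ C (w s)) →
        ∀ R : ProbabilityMeasure (IPath X),
          ((∀ A : Set (IPath X), MeasurableSet[natF X s] A →
              (R : Measure (IPath X)) A = (P : Measure (IPath X)) A) ∧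
           (∀ A : Set (IPath X), MeasurableSet[natF X s] A →
              ∀ B : Set (IPath X), MeasurableSet B →
                (R : Measure (IPath X)) (A ∩ shift s ⁻¹' B) =
                  ∫⁻ w in A, (Q w : Measure (IPath X)) B ∂(R : Measure (IPath X)))) →
          R ∈ C x) :
    ∃ sel : X → ProbabilityMeasure (IPath X),
      (∀ U : Set (ProbabilityMeasure (IPath X)), IsOpen U →
        MeasurableSet (sel ⁻¹' U)) ∧
      (∀ x, sel x ∈ C x) ∧
      ∀ x, ∀ s : ℝ≥0, ∀ A : Set (IPath X), MeasurableSet[natF X s] A →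
        ∀ B : Set (IPath X), MeasurableSet B →
          (sel x : Measure (IPath X)) (A ∩ shift s ⁻¹' B) =
            ∫⁻ w in A, (sel (w s) : Measure (IPath X)) B ∂(sel x : Measure (IPath X)) := by
  haveI : PolishSpace (IPath X) := polish_path
  letI := TopologicalSpace.metrizableSpaceMetric (IPath X)
  obtain ⟨f, hf1, hf⟩ := sep_family X
  let H : ℕ → IPath X → ENNReal := fun n => lap (Nat.unpair n).1 (f (Nat.unpair n).2)
  let φ : ℕ → ProbabilityMeasure (IPath X) → ℝ := fun n => PhiF (H n)
  have hφ : ∀ n, Continuous (φ n) := fun n => continuous_PhiF_lap _ (hf1 _)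
  have hC0 : CGood C := ⟨fun x => (hC1 x).1, fun x => (hC1 x).2.1, hC2⟩
  have hMP1' : ∀ x, ∀ P ∈ C x, ∀ s, ∃ Q, Dis s P Q ∧
      ∀ᵐ w ∂(P : Measure (IPath X)), Q w ∈ C (w s) := by
    intro x P hP s
    obtain ⟨Q, h1, h2, h3⟩ := hMP1 x P hP s
    exact ⟨Q, ⟨h1, h3⟩, h2⟩
  have hM : ∀ n, MGood C (iterC C φ n) := by
    intro n
    induction n with
    | zero =>
      refine ⟨hC0, fun x => Subset.rfl, fun x P hP s Q _ h => h, ?_⟩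
      intro x P hP s Q hQ R hRP hR
      exact hMP2 x P hP s Q hR.1 hQ R ⟨hRP, hR.2⟩
    | succ n ih =>
      exact ih.step hC3 hMP1' (continuous_lap _ (hf1 _)).measurable (lap_le_one _ (hf1 _)) (hφ n)
        (lap_dec _ (hf1 _))
  let D : X → Set (ProbabilityMeasure (IPath X)) := fun x => ⋂ n, iterC C φ n x
  have hD : CGood D := hC0.iInter hφ
  have hDC : ∀ x, D x ⊆ C x := fun x => iInter_subset (fun n => iterC C φ n x) 0
  have hDMP : ∀ x, ∀ P ∈ D x, ∀ s, ∃ Q, Dis s P Q ∧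
      ∀ᵐ w ∂(P : Measure (IPath X)), Q w ∈ D (w s) := by
    intro x P hP s
    obtain ⟨Q, h1, h2⟩ := hMP1' x P (hDC x hP) s
    refine ⟨Q, h1, ?_⟩
    have : ∀ n, ∀ᵐ w ∂(P : Measure (IPath X)), Q w ∈ iterC C φ n (w s) := fun n =>
      (hM n).mp1 x P (mem_iInter.1 hP n) s Q h1 h2
    filter_upwards [ae_all_iff.2 this] with w hw
    exact mem_iInter.2 hw
  have hmarg : ∀ x, ∀ P ∈ D x, ∀ P' ∈ D x, ∀ t, (P : Measure (IPath X)).map (fun w => w t) =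
      (P' : Measure (IPath X)).map (fun w => w t) := by
    intro x P hP P' hP' t
    refine hf _ _ (Measure.isProbabilityMeasure_map (measurable_eval t).aemeasurable)
      (Measure.isProbabilityMeasure_map (measurable_eval t).aemeasurable) fun n => ?_
    have hfm : Measurable fun y => (f n y : ENNReal) :=
      (ENNReal.continuous_coe.comp (f n).continuous).measurable
    rw [lintegral_map hfm (measurable_eval t), lintegral_map hfm (measurable_eval t)]
    refine marginal_unique (hf1 n) P P' (fun k => ?_) t
    have := iterC_eq C φ x hP hP' (Nat.pair k n)
    simpa [φ, H] using this
  have huniq : ∀ x, ∀ P ∈ D x, ∀ P' ∈ D x, P = P' := by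
    intro x P hP P' hP'
    refine path_measure_ext fun A hA S => ?_
    have := fdd_unique hD hmarg hDMP A hA S 0 (fun t _ => zero_le) x P hP P' hP'
    simpa using this
  choose sel hsel using hD.ne
  have hsing : ∀ x, D x = {sel x} := fun x =>
    Subset.antisymm (fun P hP => huniq x P hP _ (hsel x)) (singleton_subset_iff.2 (hsel x))
  refine ⟨sel, hD.measurable_of_singleton hsing, fun x => hDC x (hsel x), ?_⟩
  intro x s A hA B hB
  obtain ⟨Q, h1, h2⟩ := hDMP x (sel x) (hsel x) s
  rw [h1.2 A hA B hB]
  refine lintegral_congr_ae (ae_restrict_of_ae ?_)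
  filter_upwards [h2] with w hw
  rw [huniq _ _ hw _ (hsel (w s))]
end
end

section
/- (Strassen) Let (Ω, Ξ) be a measurable space and R a Polish space with Borel σ-algebra. Let C : w ↦ C_w be a set-valued map on Ω whose values are nonempty convex compact sets of Borel probability measures on R, measurable in the sense that for every g ∈ C_b(R) the map w ↦ H_w[g] = sup{∫_R g dμ : μ ∈ C_w} is Ξ-measurable. Let P be a probability measure on (Ω, Ξ) and Q a Borel probability measure on R. Then there exists a Markov kernel 𝔪 from Ω to R with 𝔪·P = Q and 𝔪(·, w) ∈ C_w for P-almost all w, if and only if ∫_R g(r) Q(dr) ≤ ∫_Ω H_w[g] P(dw) for every bounded continuous g : R → ℝ. -/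
open MeasureTheory Set
open scoped NNReal

noncomputable section

/-- The support function `H_w[g] = sup {∫ g dμ : μ ∈ C w}` of the compact convex set
`C w` of probability measures, evaluated at a bounded continuous `g`. -/
def suppFn {Ω' R : Type*} [MeasurableSpace Ω'] [TopologicalSpace R] [MeasurableSpace R]
    (C : Ω' → Set (ProbabilityMeasure R)) (w : Ω')
    (g : BoundedContinuousFunction R ℝ) : ℝ :=
  sSup ((fun μ : ProbabilityMeasure R => ∫ r, g r ∂(μ : Measure R)) '' C w)

section part1
open BoundedContinuousFunction

set_option linter.unusedSectionVars false

variable {Ω' : Type*} [MeasurableSpace Ω']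
    {R : Type*} [TopologicalSpace R] [MeasurableSpace R] [OpensMeasurableSpace R]

lemma abs_integral_bcf_le (μ : ProbabilityMeasure R) (g : R →ᵇ ℝ) :
    |∫ r, g r ∂(μ : Measure R)| ≤ ‖g‖ := by
  simpa using BoundedContinuousFunction.norm_integral_le_norm (μ := (μ : Measure R)) g

lemma suppFn_bdd (C : Ω' → Set (ProbabilityMeasure R)) (w : Ω') (g : R →ᵇ ℝ) :
    BddAbove ((fun μ : ProbabilityMeasure R => ∫ r, g r ∂(μ : Measure R)) '' C w) := by
  refine ⟨‖g‖, ?_⟩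
  rintro _ ⟨μ, _, rfl⟩
  exact (le_abs_self _).trans (abs_integral_bcf_le μ g)

lemma le_suppFn (C : Ω' → Set (ProbabilityMeasure R)) (w : Ω') (g : R →ᵇ ℝ)
    {μ : ProbabilityMeasure R} (hμ : μ ∈ C w) :
    ∫ r, g r ∂(μ : Measure R) ≤ suppFn C w g :=
  le_csSup (suppFn_bdd C w g) ⟨μ, hμ, rfl⟩

lemma suppFn_le (C : Ω' → Set (ProbabilityMeasure R)) (w : Ω') (hne : (C w).Nonempty)
    (g : R →ᵇ ℝ) {c : ℝ} (h : ∀ μ ∈ C w, ∫ r, g r ∂(μ : Measure R) ≤ c) :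
    suppFn C w g ≤ c := by
  refine csSup_le (hne.image _) ?_
  rintro _ ⟨μ, hμ, rfl⟩
  exact h μ hμ

lemma abs_suppFn_le (C : Ω' → Set (ProbabilityMeasure R)) (w : Ω') (hne : (C w).Nonempty)
    (g : R →ᵇ ℝ) : |suppFn C w g| ≤ ‖g‖ := by
  refine abs_le.2 ⟨?_, suppFn_le C w hne g fun μ _ =>
    (le_abs_self _).trans (abs_integral_bcf_le μ g)⟩
  obtain ⟨μ, hμ⟩ := hne
  exact (abs_le.1 (abs_integral_bcf_le μ g)).1.trans (le_suppFn C w g hμ)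

lemma suppFn_add_le (C : Ω' → Set (ProbabilityMeasure R)) (w : Ω') (hne : (C w).Nonempty)
    (g h : R →ᵇ ℝ) : suppFn C w (g + h) ≤ suppFn C w g + suppFn C w h := by
  refine suppFn_le C w hne _ fun μ hμ => ?_
  have : ∫ r, (g + h) r ∂(μ : Measure R)
      = ∫ r, g r ∂(μ : Measure R) + ∫ r, h r ∂(μ : Measure R) :=
    integral_add (g.integrable _) (h.integrable _)
  rw [this]
  exact add_le_add (le_suppFn C w g hμ) (le_suppFn C w h hμ)

lemma suppFn_smul_le (C : Ω' → Set (ProbabilityMeasure R)) (w : Ω') (hne : (C w).Nonempty)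
    (c : ℝ) (hc : 0 ≤ c) (g : R →ᵇ ℝ) : suppFn C w (c • g) ≤ c * suppFn C w g := by
  refine suppFn_le C w hne _ fun μ hμ => ?_
  have : ∫ r, (c • g) r ∂(μ : Measure R) = c * ∫ r, g r ∂(μ : Measure R) :=
    integral_const_mul c _
  rw [this]
  exact mul_le_mul_of_nonneg_left (le_suppFn C w g hμ) hc

lemma suppFn_smul (C : Ω' → Set (ProbabilityMeasure R)) (w : Ω') (hne : (C w).Nonempty)
    (c : ℝ) (hc : 0 < c) (g : R →ᵇ ℝ) : suppFn C w (c • g) = c * suppFn C w g := by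
  refine le_antisymm (suppFn_smul_le C w hne c hc.le g) ?_
  have := suppFn_smul_le C w hne c⁻¹ (inv_nonneg.2 hc.le) (c • g)
  rw [smul_smul, inv_mul_cancel₀ hc.ne', one_smul] at this
  have h2 := mul_le_mul_of_nonneg_left this hc.le
  rwa [← mul_assoc, mul_inv_cancel₀ hc.ne', one_mul] at h2

lemma suppFn_zero (C : Ω' → Set (ProbabilityMeasure R)) (w : Ω') (hne : (C w).Nonempty) :
    suppFn C w 0 = 0 := by
  have := abs_suppFn_le C w hne 0
  simpa using this

lemma suppFn_sub_le (C : Ω' → Set (ProbabilityMeasure R)) (w : Ω') (hne : (C w).Nonempty)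
    (g h : R →ᵇ ℝ) : suppFn C w g - suppFn C w h ≤ ‖g - h‖ := by
  have h1 := suppFn_add_le C w hne (g - h) h
  have h2 := (le_abs_self _).trans (abs_suppFn_le C w hne (g - h))
  rw [sub_add_cancel] at h1
  linarith

lemma suppFn_continuous (C : Ω' → Set (ProbabilityMeasure R)) (w : Ω') (hne : (C w).Nonempty) :
    Continuous fun g : R →ᵇ ℝ => suppFn C w g := by
  refine (LipschitzWith.of_le_add fun g h => ?_).continuous
  have := suppFn_sub_le C w hne g h
  rw [dist_eq_norm]
  linarith

lemma integral_bind_bcf (P : Measure Ω') [IsFiniteMeasure P]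
    (m : ProbabilityTheory.Kernel Ω' R) [ProbabilityTheory.IsMarkovKernel m] (g : R →ᵇ ℝ) :
    Integrable (fun w => ∫ r, g r ∂(m w)) P ∧
      ∫ r, g r ∂(P.bind m) = ∫ w, ∫ r, g r ∂(m w) ∂P := by
  have hi : Integrable (fun r => g r) (P.bind m) := g.integrable _
  have e := Measure.comp_eq_comp_const_apply (μ := P) (κ := m)
  rw [e] at hi ⊢
  refine ⟨?_, ?_⟩
  · simpa using hi.integral_comp
  · rw [ProbabilityTheory.Kernel.integral_comp hi]
    simp

lemma strassen_forward
    (C : Ω' → Set (ProbabilityMeasure R))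
    (hCne : ∀ w, (C w).Nonempty)
    (hCmeas : ∀ g : R →ᵇ ℝ, Measurable fun w => suppFn C w g)
    (P : Measure Ω') [IsProbabilityMeasure P] (Q : Measure R) 
    (m : ProbabilityTheory.Kernel Ω' R) [ProbabilityTheory.IsMarkovKernel m]
    (h1 : ∀ B : Set R, MeasurableSet B → Q B = ∫⁻ w, m w B ∂P)
    (h2 : ∀ᵐ w ∂P, ∃ μ ∈ C w, (μ : Measure R) = m w) (g : R →ᵇ ℝ) :
    ∫ r, g r ∂Q ≤ ∫ w, suppFn C w g ∂P := by
  have hQ : Q = P.bind m := by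
    ext B hB
    rw [h1 B hB, Measure.bind_apply hB m.aemeasurable]
  rw [hQ, (integral_bind_bcf P m g).2]
  refine integral_mono_ae (integral_bind_bcf P m g).1 ?_ ?_
  · refine Integrable.of_bound (hCmeas g).aestronglyMeasurable ‖g‖ (ae_of_all _ fun w => ?_)
    exact abs_suppFn_le C w (hCne w) g
  · filter_upwards [h2] with w ⟨μ, hμ, e⟩
    rw [← e]
    exact le_suppFn C w g hμ

/-- Hahn-Banach step. -/
lemma strassen_hb
    (C : Ω' → Set (ProbabilityMeasure R))
    (hCne : ∀ w, (C w).Nonempty)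
    (hCmeas : ∀ g : R →ᵇ ℝ, Measurable fun w => suppFn C w g)
    (P : Measure Ω') [IsProbabilityMeasure P] (Q : Measure R) [IsProbabilityMeasure Q]
    (h : ∀ g : R →ᵇ ℝ, ∫ r, g r ∂Q ≤ ∫ w, suppFn C w g ∂P) :
    ∃ L : Set Ω' → (R →ᵇ ℝ) →ₗ[ℝ] ℝ,
      (∀ A B, MeasurableSet A → MeasurableSet B → Disjoint A B → ∀ g,
        L (A ∪ B) g = L A g + L B g) ∧
      (∀ g, L univ g = ∫ r, g r ∂Q) ∧
      (∀ A, MeasurableSet A → ∀ g, L A g ≤ ∫ w in A, suppFn C w g ∂P) := by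
  have hΩ : Nonempty Ω' := P.nonempty_of_neZero
  let N : SimpleFunc Ω' (R →ᵇ ℝ) → ℝ := fun f => ∫ w, suppFn C w (f w) ∂P
  have hNint : ∀ f : SimpleFunc Ω' (R →ᵇ ℝ), Integrable (fun w => suppFn C w (f w)) P := by
    intro f
    obtain ⟨c, hc⟩ := (f.map norm).exists_forall_le
    refine Integrable.of_bound
      (SimpleFunc.measurable_bind f (fun g w => suppFn C w g) hCmeas).aestronglyMeasurable c
      (ae_of_all _ fun w => ?_)
    exact (abs_suppFn_le C w (hCne w) (f w)).trans (hc w)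
  let c : (R →ᵇ ℝ) →ₗ[ℝ] SimpleFunc Ω' (R →ᵇ ℝ) :=
    { toFun := fun g => SimpleFunc.const Ω' g
      map_add' := fun g h => by ext; rfl
      map_smul' := fun a g => by ext; rfl }
  have hcinj : Function.Injective c := by
    intro g h e
    obtain ⟨w⟩ := hΩ
    exact congrArg (fun f : SimpleFunc Ω' (R →ᵇ ℝ) => f w) e
  let φ : (R →ᵇ ℝ) →ₗ[ℝ] ℝ :=
    { toFun := fun g => ∫ r, g r ∂Q
      map_add' := fun g h => integral_add (g.integrable _) (h.integrable _)
      map_smul' := fun a g => integral_const_mul a _ }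
  let f0 : SimpleFunc Ω' (R →ᵇ ℝ) →ₗ.[ℝ] ℝ :=
    { domain := LinearMap.range c
      toFun := φ.comp (LinearEquiv.ofInjective c hcinj).symm.toLinearMap }
  have hf0 : ∀ g, f0 ⟨c g, LinearMap.mem_range_self c g⟩ = ∫ r, g r ∂Q := by
    intro g
    have : (LinearEquiv.ofInjective c hcinj).symm ⟨c g, LinearMap.mem_range_self c g⟩ = g := by
      rw [LinearEquiv.symm_apply_eq]; rfl
    change φ ((LinearEquiv.ofInjective c hcinj).symm ⟨c g, _⟩) = _
    rw [this]; rfl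
  obtain ⟨l, hl1, hl2⟩ := exists_extension_of_le_sublinear f0 N
    (by
      intro a ha x
      change ∫ w, suppFn C w (a • x w) ∂P = a * ∫ w, suppFn C w (x w) ∂P
      rw [← integral_const_mul]
      exact integral_congr_ae (ae_of_all _ fun w => suppFn_smul C w (hCne w) a ha _))
    (by
      intro x y
      change ∫ w, suppFn C w (x w + y w) ∂P ≤ _
      rw [← integral_add (hNint x) (hNint y)]
      exact integral_mono (hNint (x + y)) ((hNint x).add (hNint y))
        fun w => suppFn_add_le C w (hCne w) _ _)
    (by
      rintro ⟨_, g, rfl⟩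
      rw [hf0]
      exact h g)
  refine ⟨fun A =>
    { toFun := fun g => l ((c g).restrict A)
      map_add' := fun g h => (congrArg l ?_).trans (map_add l _ _)
      map_smul' := fun a g => (congrArg l ?_).trans (map_smul l a _) }, ?_, ?_, ?_⟩
  · by_cases hA : MeasurableSet A
    · refine SimpleFunc.ext fun w => ?_
      simp only [SimpleFunc.coe_add, Pi.add_apply, SimpleFunc.restrict_apply _ hA]
      by_cases hw : w ∈ A <;> simp [hw]
    · simp [SimpleFunc.restrict_of_not_measurable hA]
  · by_cases hA : MeasurableSet A
    · refine SimpleFunc.ext fun w => ?_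
      simp only [SimpleFunc.coe_smul, Pi.smul_apply, SimpleFunc.restrict_apply _ hA]
      by_cases hw : w ∈ A <;> simp [hw]
    · simp [SimpleFunc.restrict_of_not_measurable hA]
  · intro A B hA hB hAB g
    change l _ = l _ + l _
    rw [← map_add]
    congr 1
    refine SimpleFunc.ext fun w => ?_
    simp only [SimpleFunc.coe_add, Pi.add_apply]
    change ((c g).restrict (A ∪ B)) w = ((c g).restrict A) w + ((c g).restrict B) w
    rw [SimpleFunc.restrict_apply _ hA, SimpleFunc.restrict_apply _ hB,
      SimpleFunc.restrict_apply _ (hA.union hB), indicator_union_of_disjoint hAB]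
  · intro g
    change l ((c g).restrict univ) = _
    rw [SimpleFunc.restrict_univ, ← hf0]
    exact hl1 ⟨c g, LinearMap.mem_range_self c g⟩
  · intro A hA g
    refine (hl2 _).trans (le_of_eq ?_)
    rw [← integral_indicator hA]
    refine integral_congr_ae (ae_of_all _ fun w => ?_)
    change suppFn C w (((c g).restrict A) w) = _
    rw [SimpleFunc.restrict_apply _ hA]
    by_cases hw : w ∈ A
    · simp [hw, c]
    · simp [hw, suppFn_zero C w (hCne w)]

end part1

section part2
open BoundedContinuousFunction

lemma exists_measure_of_dominated
    {R : Type*} [TopologicalSpace R] [PolishSpace R] [MeasurableSpace R] [BorelSpace R]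
    (Q : Measure R) [IsProbabilityMeasure Q] (L : (R →ᵇ ℝ) →ₗ[ℝ] ℝ)
    (h0 : ∀ g : R →ᵇ ℝ, 0 ≤ g → 0 ≤ L g)
    (h1 : ∀ g : R →ᵇ ℝ, 0 ≤ g → L g ≤ ∫ r, g r ∂Q) :
    ∃ μ : Measure R, IsFiniteMeasure μ ∧ ∀ g : R →ᵇ ℝ, ∫ r, g r ∂μ = L g := by
  have hmono : ∀ f g : R →ᵇ ℝ, f ≤ g → L f ≤ L g := by
    intro f g hfg
    have := h0 (g - f) (sub_nonneg.2 hfg)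
    rw [map_sub] at this
    linarith
  let e : (R →ᵇ ℝ) →L[ℝ] Lp ℝ 2 Q := BoundedContinuousFunction.toLp 2 Q ℝ
  have hdense : DenseRange e := BoundedContinuousFunction.toLp_denseRange ℝ Q ℝ (by simp)
  have hcoe : ∀ g : R →ᵇ ℝ, e g =ᵐ[Q] g := fun g =>
    BoundedContinuousFunction.coeFn_toLp _ _ _ g
  have hnorm : ∀ g, ‖L g‖ ≤ 1 * ‖e g‖ := by
    intro g
    have a1 : |L g| ≤ L |g| := by
      refine abs_le.2 ⟨?_, hmono _ _ (le_abs_self g)⟩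
      have := hmono _ _ (neg_le_abs g)
      rw [map_neg] at this
      linarith
    have a2 := h1 |g| (abs_nonneg g)
    have a3 : ∫ r, |g| r ∂Q ≤ ‖e g‖ := by
      have b1 : ∫ r, |g| r ∂Q = (eLpNorm g 1 Q).toReal := by
        rw [eLpNorm_one_eq_lintegral_enorm]
        exact integral_norm_eq_lintegral_enorm g.continuous.aestronglyMeasurable
      have b2 : eLpNorm g 2 Q = eLpNorm (e g) 2 Q := (eLpNorm_congr_ae (hcoe g)).symm
      rw [b1, Lp.norm_def, ← b2]
      refine ENNReal.toReal_mono ?_ (eLpNorm_le_eLpNorm_of_exponent_le (by norm_num)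
        g.continuous.aestronglyMeasurable)
      rw [b2]
      exact (Lp.eLpNorm_lt_top _).ne
    rw [one_mul, Real.norm_eq_abs]
    linarith
  let T : Lp ℝ 2 Q →L[ℝ] ℝ := L.extendOfNorm e.toLinearMap
  have hT : ∀ g, T (e g) = L g := fun g =>
    LinearMap.extendOfNorm_eq (e := e.toLinearMap) hdense ⟨1, hnorm⟩ g
  have hTpos : ∀ x : Lp ℝ 2 Q, 0 ≤ T (x ⊔ 0) := by
    intro x
    refine hdense.induction (P := fun x => 0 ≤ T (x ⊔ 0)) ?_ ?_ x
    · rintro _ ⟨g, rfl⟩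
      have : e g ⊔ 0 = e (g ⊔ 0) := by
        apply Lp.ext
        filter_upwards [Lp.coeFn_sup (e g) 0, hcoe g, hcoe (g ⊔ 0), Lp.coeFn_zero ℝ 2 Q]
          with r a1 a2 a3 a4
        rw [a1, a3]
        simp [a2]
      rw [this, hT]
      exact h0 _ le_sup_right
    · exact isClosed_le continuous_const (T.continuous.comp (continuous_id.sup continuous_const))
  let h : Lp ℝ 2 Q := (InnerProductSpace.toDual ℝ (Lp ℝ 2 Q)).symm T
  have hh : ∀ x, inner ℝ h x = T x := fun x => InnerProductSpace.toDual_symm_apply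
  have hint : Integrable h Q := (Lp.memLp h).integrable (by norm_num)
  have hpos : 0 ≤ᵐ[Q] h := by
    refine ae_nonneg_of_forall_setIntegral_nonneg hint fun B hB hBf => ?_
    have e1 : inner ℝ (indicatorConstLp 2 hB hBf.ne (1 : ℝ)) h = ∫ r in B, h r ∂Q :=
      L2.inner_indicatorConstLp_one hB hBf.ne h
    rw [← e1, real_inner_comm, hh]
    have e2 : indicatorConstLp 2 hB hBf.ne (1 : ℝ) ⊔ 0 = indicatorConstLp 2 hB hBf.ne (1 : ℝ) := by
      apply Lp.ext
      filter_upwards [Lp.coeFn_sup (indicatorConstLp 2 hB hBf.ne (1 : ℝ)) 0,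
        indicatorConstLp_coeFn (p := 2) (hs := hB) (hμs := hBf.ne) (c := (1 : ℝ)),
        Lp.coeFn_zero ℝ 2 Q] with r a1 a2 a3
      rw [a1, Pi.sup_apply, a3, a2]
      simp only [Pi.zero_apply, sup_eq_left]
      exact indicator_nonneg (fun _ _ => zero_le_one) r
    rw [← e2]
    exact hTpos _
  refine ⟨Q.withDensity fun r => ENNReal.ofReal (h r), ?_, ?_⟩
  · exact isFiniteMeasure_withDensity_ofReal hint.2
  · intro g
    rw [integral_withDensity_eq_integral_toReal_smul₀
      hint.aestronglyMeasurable.aemeasurable.ennreal_ofReal (ae_of_all _ fun _ => by simp),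
      ← hT, ← hh, L2.inner_def]
    refine integral_congr_ae ?_
    filter_upwards [hpos, hcoe g] with r a1 a2
    rw [ENNReal.toReal_ofReal a1, a2]
    simp [mul_comm]

end part2

section part3
open BoundedContinuousFunction ProbabilityTheory

lemma ratStieltjes_ae {Ω' : Type*} [MeasurableSpace Ω'] (P : Measure Ω') [IsProbabilityMeasure P]
    (G : Measure ℝ) [IsProbabilityMeasure G] (d : ℚ → Ω' → ENNReal)
    (hd : ∀ q, Measurable (d q)) (hmono : Monotone d)
    (hle : ∀ q w, d q w ≤ 1) (hint : ∀ q : ℚ, ∫⁻ w, d q w ∂P = G (Iic (q : ℝ))) :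
    ∀ᵐ w ∂P, IsRatStieltjesPoint (fun w q => (d q w).toReal) w := by
  have hIic : Monotone fun q : ℚ => Iic (q : ℝ) := fun a b hab =>
    Iic_subset_Iic.2 (by exact_mod_cast hab)
  have hfin : ∀ q w, d q w ≠ ⊤ := fun q w => ((hle q w).trans_lt ENNReal.one_lt_top).ne
  have hfint : ∀ q, ∫⁻ w, d q w ∂P ≠ ⊤ := fun q => by rw [hint]; exact measure_ne_top _ _
  have htop : ∀ᵐ w ∂P, ⨆ q, d q w = 1 := by
    have h1 : ∫⁻ w, ⨆ q, d q w ∂P = 1 := by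
      rw [lintegral_iSup_directed (fun q => (hd q).aemeasurable) hmono.directed_le]
      simp_rw [hint]
      rw [← hIic.measure_iUnion]
      have : (⋃ q : ℚ, Iic (q : ℝ)) = univ := by
        refine eq_univ_of_forall fun x => ?_
        obtain ⟨q, hq⟩ := exists_rat_gt x
        exact mem_iUnion.2 ⟨q, hq.le⟩
      rw [this, measure_univ]
    have := ae_eq_of_ae_le_of_lintegral_le (μ := P) (f := fun w => ⨆ q, d q w) (g := fun _ => 1)
      (ae_of_all _ fun w => iSup_le fun q => hle q w) (by rw [h1]; simp)
      aemeasurable_const (by rw [h1]; simp)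
    exact this
  have hbot : ∀ᵐ w ∂P, ⨅ q, d q w = 0 := by
    have h1 : ∫⁻ w, ⨅ q, d q w ∂P = 0 := by
      rw [lintegral_iInf_directed_of_measurable (IsProbabilityMeasure.ne_zero P) hd hfint
        hmono.directed_ge]
      simp_rw [hint]
      rw [← hIic.directed_ge.measure_iInter (fun q => measurableSet_Iic.nullMeasurableSet)
        ⟨0, measure_ne_top _ _⟩]
      have : (⋂ q : ℚ, Iic (q : ℝ)) = ∅ := by
        refine eq_empty_of_forall_notMem fun x hx => ?_
        obtain ⟨q, hq⟩ := exists_rat_lt x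
        exact absurd (mem_iInter.1 hx q) (not_le.2 hq)
      rw [this, measure_empty]
    exact (lintegral_eq_zero_iff (Measurable.iInf hd)).1 h1
  have hright : ∀ᵐ w ∂P, ∀ t : ℚ, ⨅ r : Ioi t, d r w = d t w := by
    refine ae_all_iff.2 fun t => ?_
    have h1 : ∫⁻ w, ⨅ r : Ioi t, d r w ∂P = ∫⁻ w, d t w ∂P := by
      have hm : Monotone fun r : Ioi t => d r := fun a b hab => hmono hab
      have hm2 : Monotone fun r : Ioi t => Iic ((r : ℚ) : ℝ) := fun a b hab => hIic hab
      rw [lintegral_iInf_directed_of_measurable (IsProbabilityMeasure.ne_zero P)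
        (fun r : Ioi t => hd r) (fun r => hfint r) hm.directed_ge]
      simp_rw [hint]
      rw [← hm2.directed_ge.measure_iInter (fun q => measurableSet_Iic.nullMeasurableSet)
        ⟨⟨t + 1, by simp⟩, measure_ne_top _ _⟩]
      congr 1
      ext x
      simp only [mem_iInter, mem_Iic, Subtype.forall, mem_Ioi]
      constructor
      · intro h
        by_contra hx
        push Not at hx
        obtain ⟨q, hq1, hq2⟩ := exists_rat_btwn hx
        exact absurd (h q (by exact_mod_cast hq1)) (not_le.2 hq2)
      · intro h q hq
        exact h.trans (by exact_mod_cast hq.le)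
    have := ae_eq_of_ae_le_of_lintegral_le (μ := P) (f := d t) (g := fun w => ⨅ r : Ioi t, d r w)
      (ae_of_all _ fun w => le_iInf fun r => hmono (le_of_lt r.2) w) (hfint t)
      (Measurable.iInf fun r : Ioi t => hd r).aemeasurable h1.le
    filter_upwards [this] with w hw using hw.symm
  filter_upwards [htop, hbot, hright] with w h1 h2 h3
  have hmw : Monotone fun q => d q w := fun a b hab => hmono hab w
  refine ⟨fun a b hab => ENNReal.toReal_mono (hfin b w) (hmono hab w), ?_, ?_, ?_⟩
  · have := tendsto_atTop_iSup hmw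
    rw [h1] at this
    exact (ENNReal.tendsto_toReal ENNReal.one_ne_top).comp this
  · have := tendsto_atBot_iInf hmw
    rw [h2] at this
    exact (ENNReal.tendsto_toReal ENNReal.zero_ne_top).comp this
  · intro t
    change ⨅ r : Ioi t, (d r w).toReal = (d t w).toReal
    rw [← h3 t]
    exact (ENNReal.toReal_iInf fun r : Ioi t => hfin r w).symm

lemma exists_kernel_real {Ω' : Type*} [MeasurableSpace Ω'] (P : Measure Ω')
    [IsProbabilityMeasure P]
    (M : Set Ω' → Measure ℝ) (hM0 : ∀ A, MeasurableSet A → M A univ = P A)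
    (hMadd : ∀ A : ℕ → Set Ω', (∀ i, MeasurableSet (A i)) → Pairwise (Function.onFun Disjoint A) →
      M (⋃ i, A i) = Measure.sum fun i => M (A i)) :
    ∃ κ : Kernel Ω' ℝ, IsMarkovKernel κ ∧
      ∀ A, MeasurableSet A → (P.restrict A).bind κ = M A := by
  let ν : ℚ → Measure Ω' := fun q => Measure.ofMeasurable (fun A _ => M A (Iic (q : ℝ)))
    (measure_mono_null (subset_univ _) (by simp [hM0 ∅ .empty]))
    (fun A hA hd => by rw [hMadd A hA hd, Measure.sum_apply _ measurableSet_Iic])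
  have hν : ∀ q A, MeasurableSet A → ν q A = M A (Iic (q : ℝ)) := fun q A hA =>
    Measure.ofMeasurable_apply A hA
  have hνP : ∀ q, ν q ≤ P := fun q => Measure.le_iff.2 fun A hA => by
    rw [hν q A hA, ← hM0 A hA]; exact measure_mono (subset_univ _)
  have hνmono : Monotone ν := fun a b hab => Measure.le_iff.2 fun A hA => by
    rw [hν a A hA, hν b A hA]
    exact measure_mono (Iic_subset_Iic.2 (by exact_mod_cast hab))
  have hfin : ∀ q, IsFiniteMeasure (ν q) := fun q => isFiniteMeasure_of_le P (hνP q)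
  let d0 : ℚ → Ω' → ENNReal := fun q => (ν q).rnDeriv P
  have hd0 : ∀ q, Measurable (d0 q) := fun q => Measure.measurable_rnDeriv _ _
  have hd0int : ∀ q A, MeasurableSet A → ∫⁻ w in A, d0 q w ∂P = M A (Iic (q : ℝ)) := by
    intro q A hA
    rw [← hν q A hA]
    exact Measure.setLIntegral_rnDeriv (Measure.absolutelyContinuous_of_le (hνP q)) A
  have hd0le : ∀ᵐ w ∂P, ∀ q, d0 q w ≤ 1 := by
    refine ae_all_iff.2 fun q => ?_
    exact Measure.rnDeriv_le_one_of_le (hνP q)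
  have hd0mono : ∀ᵐ w ∂P, ∀ a b, a ≤ b → d0 a w ≤ d0 b w := by
    refine ae_all_iff.2 fun a => ae_all_iff.2 fun b => ?_
    by_cases hab : a ≤ b
    · have : d0 a ≤ᵐ[P] d0 b := by
        refine ae_le_of_forall_setLIntegral_le_of_sigmaFinite (hd0 a) fun A hA _ => ?_
        rw [hd0int a A hA, hd0int b A hA]
        exact measure_mono (Iic_subset_Iic.2 (by exact_mod_cast hab))
      filter_upwards [this] with w hw _ using hw
    · exact ae_of_all _ fun w h => absurd h hab
  let d : ℚ → Ω' → ENNReal := fun q w => ⨆ r : Iic q, min (d0 r w) 1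
  have hdd : ∀ q, d q =ᵐ[P] d0 q := by
    intro q
    filter_upwards [hd0le, hd0mono] with w h1 h2
    refine le_antisymm (iSup_le fun r => (min_le_left _ _).trans (h2 _ _ r.2)) ?_
    refine le_iSup_of_le (⟨q, le_refl q⟩ : Iic q) ?_
    exact le_min le_rfl (h1 q)
  have hd : ∀ q, Measurable (d q) := fun q =>
    Measurable.iSup fun r : Iic q => (hd0 r).min measurable_const
  have hdmono : Monotone d := fun a b hab w => iSup_le fun r =>
    le_iSup (fun r : Iic b => min (d0 r w) 1) ⟨r, le_trans r.2 hab⟩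
  have hdle : ∀ q w, d q w ≤ 1 := fun q w => iSup_le fun r => min_le_right _ _
  have hdint : ∀ q A, MeasurableSet A → ∫⁻ w in A, d q w ∂P = M A (Iic (q : ℝ)) := by
    intro q A hA
    rw [← hd0int q A hA]
    exact lintegral_congr_ae (ae_restrict_of_ae (hdd q))
  have hMu : IsProbabilityMeasure (M univ) := ⟨by rw [hM0 _ .univ, measure_univ]⟩
  have hae := ratStieltjes_ae P (M univ) d hd hdmono hdle
    (fun q => by rw [← hdint q univ .univ, Measure.restrict_univ])
  let f : Ω' → ℚ → ℝ := fun w q => (d q w).toReal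
  have hf : Measurable f := measurable_pi_lambda _ fun q => (hd q).ennreal_toReal
  let κ : Kernel Ω' ℝ :=
    ⟨fun w => (stieltjesOfMeasurableRat f hf w).measure,
      measurable_measure_stieltjesOfMeasurableRat hf⟩
  have hκ : IsMarkovKernel κ := ⟨fun w => ⟨measure_stieltjesOfMeasurableRat_univ hf w⟩⟩
  refine ⟨κ, hκ, fun A hA => ?_⟩
  have hfinA : IsFiniteMeasure (M A) := ⟨by rw [hM0 A hA]; exact measure_lt_top _ _⟩
  refine ext_of_generate_finite _ Real.borel_eq_generateFrom_Iic_rat Real.isPiSystem_Iic_rat ?_ ?_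
  · intro B hB
    simp only [mem_iUnion, mem_singleton_iff] at hB
    obtain ⟨q, rfl⟩ := hB
    rw [Measure.bind_apply measurableSet_Iic κ.aemeasurable, ← hdint q A hA]
    refine lintegral_congr_ae (ae_restrict_of_ae ?_)
    filter_upwards [hae] with w hw
    change (stieltjesOfMeasurableRat f hf w).measure (Iic (q : ℝ)) = _
    rw [measure_stieltjesOfMeasurableRat_Iic, stieltjesOfMeasurableRat_eq,
      toRatCDF_of_isRatStieltjesPoint hw]
    exact ENNReal.ofReal_toReal ((hdle q w).trans_lt ENNReal.one_lt_top).ne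
  · rw [Measure.bind_apply .univ κ.aemeasurable, hM0 A hA]
    simp

lemma exists_kernel {Ω' : Type*} [MeasurableSpace Ω'] (P : Measure Ω') [IsProbabilityMeasure P]
    {R : Type*} [TopologicalSpace R] [PolishSpace R] [MeasurableSpace R] [BorelSpace R]
    (Q : Measure R) [IsProbabilityMeasure Q] (L : Set Ω' → (R →ᵇ ℝ) →ₗ[ℝ] ℝ)
    (hadd : ∀ A B, MeasurableSet A → MeasurableSet B → Disjoint A B → ∀ g,
        L (A ∪ B) g = L A g + L B g)
    (huniv : ∀ g, L univ g = ∫ r, g r ∂Q)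
    (hpos : ∀ A, MeasurableSet A → ∀ g, 0 ≤ g → 0 ≤ L A g)
    (hone : ∀ A, MeasurableSet A → L A 1 = P.real A) :
    ∃ m : Kernel Ω' R, IsMarkovKernel m ∧
      ∀ A, MeasurableSet A → ∀ g : R →ᵇ ℝ, ∫ r, g r ∂((P.restrict A).bind m) = L A g := by
  have hex : ∀ A, ∃ μ : Measure R, MeasurableSet A →
      IsFiniteMeasure μ ∧ ∀ g : R →ᵇ ℝ, ∫ r, g r ∂μ = L A g := by
    intro A
    by_cases hA : MeasurableSet A
    · obtain ⟨μ, h1, h2⟩ := exists_measure_of_dominated Q (L A) (hpos A hA) (fun g hg => by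
        rw [← huniv, ← union_compl_self A, hadd A Aᶜ hA hA.compl disjoint_compl_right]
        have := hpos Aᶜ hA.compl g hg
        linarith)
      exact ⟨μ, fun _ => ⟨h1, h2⟩⟩
    · exact ⟨0, fun h => absurd h hA⟩
  choose μ hμ using hex
  have hmass : ∀ A, MeasurableSet A → μ A univ = P A := by
    intro A hA
    have := (hμ A hA).1
    have h1 := (hμ A hA).2 1
    rw [hone A hA] at h1
    simp only [BoundedContinuousFunction.coe_one, Pi.one_apply, integral_const, smul_eq_mul,
      mul_one] at h1
    exact (ENNReal.toReal_eq_toReal_iff' (measure_ne_top _ _) (measure_ne_top _ _)).1 h1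
  have hμadd : ∀ A B, MeasurableSet A → MeasurableSet B → Disjoint A B →
      μ (A ∪ B) = μ A + μ B := by
    intro A B hA hB hAB
    have i1 := (hμ A hA).1
    have i2 := (hμ B hB).1
    have i3 := (hμ _ (hA.union hB)).1
    refine ext_of_forall_integral_eq_of_IsFiniteMeasure fun g => ?_
    rw [integral_add_measure (g.integrable _) (g.integrable _), (hμ A hA).2, (hμ B hB).2,
      (hμ _ (hA.union hB)).2, hadd A B hA hB hAB]
  have hμempty : μ ∅ = 0 := Measure.measure_univ_eq_zero.1 (by simp [hmass ∅ .empty])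
  have hμfin : ∀ (A : ℕ → Set Ω'), (∀ i, MeasurableSet (A i)) →
      Pairwise (Function.onFun Disjoint A) → ∀ s : Finset ℕ,
      μ (⋃ i ∈ s, A i) = ∑ i ∈ s, μ (A i) := by
    intro A hA hd s
    induction s using Finset.induction_on with
    | empty => simpa using hμempty
    | insert a s has ih =>
      rw [Finset.set_biUnion_insert, hμadd _ _ (hA a) (s.measurableSet_biUnion fun i _ => hA i),
        ih, Finset.sum_insert has]
      refine disjoint_iUnion₂_right.2 fun i hi => hd ?_
      rintro rfl
      exact has hi
  have hμmono : ∀ A B, MeasurableSet A → MeasurableSet B → A ⊆ B → μ A ≤ μ B := by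
    intro A B hA hB hAB
    rw [← union_sdiff_cancel hAB, hμadd _ _ hA (hB.diff hA) disjoint_sdiff_right]
    exact Measure.le_add_right le_rfl
  have hμsum : ∀ A : ℕ → Set Ω', (∀ i, MeasurableSet (A i)) →
      Pairwise (Function.onFun Disjoint A) → μ (⋃ i, A i) = Measure.sum fun i => μ (A i) := by
    intro A hA hd
    have hU := MeasurableSet.iUnion hA
    have i1 := (hμ _ hU).1
    have hle : (Measure.sum fun i => μ (A i)) ≤ μ (⋃ i, A i) := by
      refine Measure.le_iff.2 fun B hB => ?_
      rw [Measure.sum_apply _ hB, ENNReal.tsum_eq_iSup_sum]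
      refine iSup_le fun s => ?_
      rw [← Measure.finsetSum_apply, ← hμfin A hA hd s]
      exact hμmono _ _ (s.measurableSet_biUnion fun i _ => hA i) hU
        (iUnion₂_subset fun i _ => subset_iUnion A i) B
    have i2 : IsFiniteMeasure (Measure.sum fun i => μ (A i)) := isFiniteMeasure_of_le _ hle
    refine (Measure.eq_of_le_of_measure_univ_eq hle ?_).symm
    rw [Measure.sum_apply _ .univ, hmass _ hU, measure_iUnion hd hA]
    exact tsum_congr fun i => hmass _ (hA i)
  let e := embeddingReal R
  have he : MeasurableEmbedding e := measurableEmbedding_embeddingReal R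
  have hR : Nonempty R := Q.nonempty_of_neZero
  obtain ⟨s, hs, hse⟩ := he.exists_measurable_extend measurable_id (fun _ => hR)
  obtain ⟨κ, hκ, hκM⟩ := exists_kernel_real P (fun A => (μ A).map e)
    (fun A hA => by rw [Measure.map_apply he.measurable .univ, preimage_univ, hmass A hA])
    (fun A hA hd => by
      rw [hμsum A hA hd, Measure.map_sum he.measurable.aemeasurable])
  refine ⟨κ.map s, Kernel.IsMarkovKernel.map _ hs, fun A hA g => ?_⟩
  have : (P.restrict A).bind (κ.map s) = μ A := by
    have h1 : (P.restrict A).bind (κ.map s) = ((P.restrict A).bind κ).map s := by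
      rw [Measure.map_comp _ _ hs]
    rw [h1, hκM A hA, Measure.map_map hs he.measurable, hse, Measure.map_id]
  rw [this, (hμ A hA).2]

end part3

section part4
open BoundedContinuousFunction ProbabilityTheory

lemma exists_countable_separating_bcf
    (R : Type*) [TopologicalSpace R] [PolishSpace R] [MeasurableSpace R] [BorelSpace R] :
    ∃ D : Set (R →ᵇ ℝ), D.Countable ∧ ∀ μ ν : ProbabilityMeasure R,
      (∀ g ∈ D, ∫ r, g r ∂(μ : Measure R) = ∫ r, g r ∂(ν : Measure R)) → μ = ν := by
  let b := TopologicalSpace.countableBasis R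
  have hb : TopologicalSpace.IsTopologicalBasis b := TopologicalSpace.isBasis_countableBasis R
  have hbc : b.Countable := TopologicalSpace.countable_countableBasis R
  let S : Set (Set R) := (fun t : Set (Set R) => (⋃₀ t)ᶜ) '' {t | t.Finite ∧ t ⊆ b}
  have hSc : S.Countable := (Set.countable_ofPred_finite_subset hbc).image _
  have hScl : ∀ F ∈ S, IsClosed F := by
    rintro _ ⟨t, ht, rfl⟩
    exact (isOpen_sUnion fun u hu => hb.isOpen (ht.2 hu)).isClosed_compl
  have hSpi : IsPiSystem S := by
    rintro _ ⟨t, ht, rfl⟩ _ ⟨t', ht', rfl⟩ _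
    refine ⟨t ∪ t', ⟨ht.1.union ht'.1, union_subset ht.2 ht'.2⟩, ?_⟩
    change (⋃₀ (t ∪ t'))ᶜ = (⋃₀ t)ᶜ ∩ (⋃₀ t')ᶜ
    rw [sUnion_union, compl_union]
  have hSgen : ‹MeasurableSpace R› = MeasurableSpace.generateFrom S := by
    refine le_antisymm ?_ ?_
    · rw [BorelSpace.measurable_eq (α := R), hb.borel_eq_generateFrom]
      refine MeasurableSpace.generateFrom_le fun u hu => ?_
      have h1 : MeasurableSet[MeasurableSpace.generateFrom S] uᶜ :=
        MeasurableSpace.measurableSet_generateFrom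
          ⟨{u}, ⟨finite_singleton u, singleton_subset_iff.2 hu⟩, by simp⟩
      simpa using h1.compl
    · exact MeasurableSpace.generateFrom_le fun F hF => (hScl F hF).measurableSet
  let toR : (R →ᵇ ℝ≥0) → (R →ᵇ ℝ) := fun f =>
    BoundedContinuousFunction.comp ((↑) : ℝ≥0 → ℝ) (LipschitzWith.subtype_val _) f
  have : Countable S := hSc.to_subtype
  refine ⟨range fun p : S × ℕ => toR ((hScl p.1 p.1.2).apprSeq p.2), countable_range _, ?_⟩
  intro μ ν h
  suffices hm : (μ : Measure R) = (ν : Measure R) from Subtype.ext hm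
  haveI : IsFiniteMeasure (μ : Measure R) := by infer_instance
  refine ext_of_generate_finite (μ := (μ : Measure R)) (ν := (ν : Measure R)) S hSgen hSpi ?_ (by simp)
  intro F hF
  have hFc := hScl F hF
  refine tendsto_nhds_unique (HasOuterApproxClosed.tendsto_lintegral_apprSeq hFc (μ : Measure R)) ?_
  refine (HasOuterApproxClosed.tendsto_lintegral_apprSeq hFc (ν : Measure R)).congr fun n => ?_
  have h1 := h _ ⟨(⟨F, hF⟩, n), rfl⟩
  have h2 : (∫⁻ r, hFc.apprSeq n r ∂(μ : Measure R)).toReal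
      = (∫⁻ r, hFc.apprSeq n r ∂(ν : Measure R)).toReal := by
    rw [BoundedContinuousFunction.toReal_lintegral_coe_eq_integral,
      BoundedContinuousFunction.toReal_lintegral_coe_eq_integral]
    exact h1
  exact ((ENNReal.toReal_eq_toReal_iff' (BoundedContinuousFunction.lintegral_lt_top_of_nnreal _ _).ne
    (BoundedContinuousFunction.lintegral_lt_top_of_nnreal _ _).ne).1 h2).symm

lemma integral_finset_comb {R : Type*} [TopologicalSpace R] [MeasurableSpace R]
    [OpensMeasurableSpace R] {ι : Type*} (s : Finset ι) (c : ι → ℝ) (G : ι → R →ᵇ ℝ)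
    (μ : Measure R) [IsFiniteMeasure μ] :
    ∫ r, (∑ i ∈ s, c i • G i) r ∂μ = ∑ i ∈ s, c i * ∫ r, G i r ∂μ := by
  simp only [BoundedContinuousFunction.coe_sum, Finset.sum_apply, BoundedContinuousFunction.coe_smul,
    smul_eq_mul]
  rw [integral_finsetSum _ fun i _ => ((G i).integrable μ).const_mul _]
  simp only [integral_const_mul]

lemma mem_of_le_suppFn {Ω' : Type*} [MeasurableSpace Ω']
    {R : Type*} [TopologicalSpace R] [PolishSpace R] [MeasurableSpace R] [BorelSpace R]
    (C : Ω' → Set (ProbabilityMeasure R)) (w : Ω')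
    (hne : (C w).Nonempty) (hcpt : IsCompact (C w)) (hconv : ConvexMeasSet (C w))
    (D : Set (R →ᵇ ℝ)) (hD : ∀ μ ν : ProbabilityMeasure R,
      (∀ g ∈ D, ∫ r, g r ∂(μ : Measure R) = ∫ r, g r ∂(ν : Measure R)) → μ = ν)
    (μ : ProbabilityMeasure R)
    (h : ∀ g ∈ Submodule.span ℝ D, ∫ r, g r ∂(μ : Measure R) ≤ suppFn C w g) : μ ∈ C w := by
  have hcont : ∀ g : R →ᵇ ℝ, Continuous fun ν : ProbabilityMeasure R =>
      ∫ r, g r ∂(ν : Measure R) := fun g =>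
    ProbabilityMeasure.continuous_integral_boundedContinuousFunction g
  have key : ∀ s : Finset D, ∃ ν ∈ C w, ∀ i ∈ s,
      ∫ r, (i : R →ᵇ ℝ) r ∂(ν : Measure R) = ∫ r, (i : R →ᵇ ℝ) r ∂(μ : Measure R) := by
    classical
    intro s
    let Ψ : ProbabilityMeasure R → (s → ℝ) := fun ν i => ∫ r, (i : R →ᵇ ℝ) r ∂(ν : Measure R)
    have hΨ : Continuous Ψ := continuous_pi fun i => hcont _
    have hc : Convex ℝ (Ψ '' C w) := by
      rintro _ ⟨ν₁, h₁, rfl⟩ _ ⟨ν₂, h₂, rfl⟩ a b ha hb hab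
      lift a to ℝ≥0 using ha
      lift b to ℝ≥0 using hb
      have hab' : a + b = 1 := by exact_mod_cast hab
      have hp : IsProbabilityMeasure (a • (ν₁ : Measure R) + b • (ν₂ : Measure R)) := by
        constructor
        simp only [Measure.coe_add, Measure.coe_nnreal_smul_apply, Pi.add_apply, measure_univ,
          mul_one]
        exact_mod_cast hab'
      refine ⟨⟨_, hp⟩, hconv ν₁ h₁ ν₂ h₂ a b hab' _ rfl, ?_⟩
      funext i
      change ∫ r, (i : R →ᵇ ℝ) r ∂(a • (ν₁ : Measure R) + b • (ν₂ : Measure R)) = _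
      rw [integral_add_measure (BoundedContinuousFunction.integrable _ _)
        (BoundedContinuousFunction.integrable _ _), integral_smul_nnreal_measure,
        integral_smul_nnreal_measure]
      rfl
    have hmem : Ψ μ ∈ Ψ '' C w := by
      by_contra hnot
      obtain ⟨f, u, hf1, hf2⟩ := geometric_hahn_banach_closed_point hc
        (hcpt.image hΨ).isClosed hnot
      let g : R →ᵇ ℝ := ∑ i : s, f (Pi.single i 1) • ((i : D) : R →ᵇ ℝ)
      have hg : g ∈ Submodule.span ℝ D := Submodule.sum_mem _ fun i _ =>
        Submodule.smul_mem _ _ (Submodule.subset_span i.1.2)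
      have hgf : ∀ ν : ProbabilityMeasure R, ∫ r, g r ∂(ν : Measure R) = f (Ψ ν) := by
        intro ν
        rw [integral_finset_comb]
        have := LinearMap.pi_apply_eq_sum_univ f.toLinearMap (Ψ ν)
        rw [ContinuousLinearMap.coe_coe] at this
        rw [this]
        refine Finset.sum_congr rfl fun i _ => ?_
        rw [smul_eq_mul, mul_comm]
        congr 2
        funext j
        simp [Pi.single_apply, eq_comm]
      have h1 := h g hg
      have h2 : suppFn C w g ≤ u := suppFn_le C w hne g fun ν hν => by
        rw [hgf]; exact (hf1 _ ⟨ν, hν, rfl⟩).le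
      rw [hgf] at h1
      linarith
    obtain ⟨ν, hν, e⟩ := hmem
    exact ⟨ν, hν, fun i hi => congrFun e ⟨i, hi⟩⟩
  let Z : Finset D → Set (ProbabilityMeasure R) := fun s =>
    C w ∩ ⋂ i ∈ s, {ν | ∫ r, (i : R →ᵇ ℝ) r ∂(ν : Measure R)
      = ∫ r, (i : R →ᵇ ℝ) r ∂(μ : Measure R)}
  have hcl : ∀ s : Finset D, IsClosed (⋂ i ∈ s, {ν : ProbabilityMeasure R |
      ∫ r, (i : R →ᵇ ℝ) r ∂(ν : Measure R) = ∫ r, (i : R →ᵇ ℝ) r ∂(μ : Measure R)}) :=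
    fun s => isClosed_biInter fun i _ => isClosed_eq (hcont _) continuous_const
  have hZ : (⋂ s, Z s).Nonempty := by
    classical
    refine IsCompact.nonempty_iInter_of_directed_nonempty_isCompact_isClosed Z ?_ ?_ ?_ ?_
    · have : Antitone Z := fun s t hst => inter_subset_inter_right _
        (biInter_subset_biInter_left hst)
      exact this.directed_ge
    · intro s
      obtain ⟨ν, h1, h2⟩ := key s
      exact ⟨ν, h1, mem_iInter₂.2 h2⟩
    · exact fun s => hcpt.inter_right (hcl s)
    · exact fun s => hcpt.isClosed.inter (hcl s)
  obtain ⟨ν, hν⟩ := hZ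
  have h1 : ν ∈ C w := (mem_iInter.1 hν ∅).1
  have h2 : ν = μ := hD ν μ fun g hg =>
    mem_iInter₂.1 (mem_iInter.1 hν {⟨g, hg⟩}).2 ⟨g, hg⟩ (Finset.mem_singleton_self _)
  exact h2 ▸ h1

end part4

/-- **Strassen's theorem.**  Let `(Ω, Ξ)` be a measurable space, `R` a Polish space,
and `C : w ↦ C_w` a set-valued map with nonempty convex compact values in the Borel
probability measures on `R`, measurable in the sense that `w ↦ H_w[g]` is measurable
for every bounded continuous `g`.  For probability measures `P` on `Ω` and `Q` on `R`,
there exists a Markov kernel `𝔪` from `Ω` to `R` with `𝔪 · P = Q` and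
`𝔪(·, w) ∈ C_w` for `P`-a.e. `w` iff `∫ g dQ ≤ ∫ H_w[g] dP` for all `g ∈ C_b(R)`. -/
theorem strassen
    {Ω' : Type*} [MeasurableSpace Ω']
    {R : Type*} [TopologicalSpace R] [PolishSpace R] [MeasurableSpace R] [BorelSpace R]
    (C : Ω' → Set (ProbabilityMeasure R))
    (hCne : ∀ w, (C w).Nonempty)
    (hCcpt : ∀ w, IsCompact (C w))
    (hCconv : ∀ w, ConvexMeasSet (C w))
    (hCmeas : ∀ g : BoundedContinuousFunction R ℝ, Measurable fun w => suppFn C w g)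
    (P : Measure Ω') [IsProbabilityMeasure P]
    (Q : Measure R) [IsProbabilityMeasure Q] :
    (∃ m : ProbabilityTheory.Kernel Ω' R, ProbabilityTheory.IsMarkovKernel m ∧
        (∀ B : Set R, MeasurableSet B → Q B = ∫⁻ w, m w B ∂P) ∧
        (∀ᵐ w ∂P, ∃ μ ∈ C w, (μ : Measure R) = m w)) ↔
      (∀ g : BoundedContinuousFunction R ℝ,
        ∫ r, g r ∂Q ≤ ∫ w, suppFn C w g ∂P) := by
  constructor
  · rintro ⟨m, hm, h1, h2⟩ g
    exact strassen_forward C hCne hCmeas P Q m h1 h2 g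
  intro h
  obtain ⟨L, hadd, huniv, hL⟩ := strassen_hb C hCne hCmeas P Q h
  have hpos : ∀ A, MeasurableSet A → ∀ g, 0 ≤ g → 0 ≤ L A g := by
    intro A hA g hg
    have h1 := hL A hA (-g)
    rw [map_neg] at h1
    have h2 : ∫ w in A, suppFn C w (-g) ∂P ≤ 0 := by
      refine integral_nonpos fun w => suppFn_le C w (hCne w) _ fun μ _ => ?_
      refine integral_nonpos fun r => ?_
      simpa using hg r
    linarith
  have hone : ∀ A, MeasurableSet A → L A 1 = P.real A := by
    intro A hA
    have h1 := hL A hA 1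
    have h2 := hL A hA (-1)
    have e1 : ∀ w, suppFn C w 1 ≤ 1 := fun w => suppFn_le C w (hCne w) _ fun μ _ => by simp
    have e2 : ∀ w, suppFn C w (-1) ≤ -1 := fun w =>
      suppFn_le C w (hCne w) _ fun μ _ => by simp
    have hint : ∀ g, IntegrableOn (fun w => suppFn C w g) A P := fun g =>
      (Integrable.of_bound (hCmeas g).aestronglyMeasurable ‖g‖
        (ae_of_all _ fun w => abs_suppFn_le C w (hCne w) g)).integrableOn
    have f1 := integral_mono (hint 1) (integrable_const (1 : ℝ)) e1
    have f2 := integral_mono (hint (-1)) (integrable_const (-1 : ℝ)) e2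
    simp only [integral_const, smul_eq_mul, mul_one, measureReal_restrict_apply .univ,
      univ_inter, mul_neg] at f1 f2
    rw [map_neg] at h2
    linarith
  obtain ⟨m, hm, hmL⟩ := exists_kernel P Q L hadd huniv hpos hone
  refine ⟨m, hm, ?_, ?_⟩
  · intro B hB
    have : Q = P.bind m := by
      refine ext_of_forall_integral_eq_of_IsFiniteMeasure fun g => ?_
      rw [← huniv, ← hmL univ .univ g, Measure.restrict_univ]
    rw [this, Measure.bind_apply hB m.aemeasurable]
  · have hg : ∀ g : BoundedContinuousFunction R ℝ,
        ∀ᵐ w ∂P, ∫ r, g r ∂(m w) ≤ suppFn C w g := by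
      intro g
      refine ae_le_of_forall_setIntegral_le (integral_bind_bcf P m g).1
        (Integrable.of_bound (hCmeas g).aestronglyMeasurable ‖g‖
          (ae_of_all _ fun w => abs_suppFn_le C w (hCne w) g)) fun A hA _ => ?_
      rw [← (integral_bind_bcf (P.restrict A) m g).2, hmL A hA]
      exact hL A hA g
    obtain ⟨D, hDc, hD⟩ := exists_countable_separating_bcf R
    obtain ⟨c, hcc, hc⟩ := hDc.isSeparable.span (R := ℝ)
    have hall : ∀ᵐ w ∂P, ∀ g ∈ c, ∫ r, g r ∂(m w) ≤ suppFn C w g :=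
      (ae_ball_iff hcc).2 fun g _ => hg g
    filter_upwards [hall] with w hw
    let μ : ProbabilityMeasure R := ⟨m w, inferInstance⟩
    refine ⟨μ, ?_, rfl⟩
    refine mem_of_le_suppFn C w (hCne w) (hCcpt w) (hCconv w) D hD μ fun g hgD => ?_
    have hcl : IsClosed {g : BoundedContinuousFunction R ℝ |
        ∫ r, g r ∂(m w) ≤ suppFn C w g} := by
      refine isClosed_le ?_ (suppFn_continuous C w (hCne w))
      refine (LipschitzWith.of_le_add fun f g => ?_).continuous
      have h1 := (le_abs_self _).trans (abs_integral_bcf_le μ (f - g))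
      have h2 : ∫ r, (f - g) r ∂(μ : Measure R) = ∫ r, f r ∂(m w) - ∫ r, g r ∂(m w) :=
        integral_sub (f.integrable _) (g.integrable _)
      rw [dist_eq_norm]
      linarith
    exact hcl.closure_subset_iff.2 hw (hc hgD)
end
end

section
/- Let X be a Polish space, Ω = C([0,∞) → X) with the compact-open topology, 𝒫 the space of Borel probability measures on Ω with the weak topology, and let 𝒞 : X → 2^𝒫 have nonempty compact convex values with {x : 𝒞(x) ∩ K ≠ ∅} Borel for every closed K ⊆ 𝒫. For f ∈ C_b(Ω) let h_x[f] = sup{P f : P ∈ 𝒞(x)}, and for P ∈ 𝒫, s ≥ 0 set K(P, s, 𝒞) = {Q ∈ 𝒫 : Q f ≤ ∫ h_{w(s)}[f] P(dw) for all f ∈ C_b(Ω)}. For a continuous linear functional η on 𝒫 and a compact convex K ⊆ 𝒫, let V_η[K] = {P ∈ K : η(P) = sup_{Q ∈ K} η(Q)}, and let V_η[𝒞] denote x ↦ V_η[𝒞(x)]. Then for any continuous linear functional η on 𝒫, V_η[K(P, s, 𝒞)] = K(P, s, V_η[𝒞]). -/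
open MeasureTheory Set
open scoped NNReal

noncomputable section

variable {X : Type*} [TopologicalSpace X]

/-- `Q f = ∫ f dQ` for a bounded continuous `f` on path space. -/
def intBCF (f : BoundedContinuousFunction (IPath X) ℝ)
    (Q : ProbabilityMeasure (IPath X)) : ℝ :=
  ∫ w, f w ∂(Q : Measure (IPath X))

/-- The support function `h_x[f] = sup {P f : P ∈ 𝒞 x}`. -/
def hSupp (C : X → Set (ProbabilityMeasure (IPath X))) (x : X)
    (f : BoundedContinuousFunction (IPath X) ℝ) : ℝ :=
  sSup (intBCF f '' C x)

/-- The set `K(P, s, 𝒞) = {Q : Q f ≤ ∫ h_{w(s)}[f] dP, ∀ f ∈ C_b(Ω)}`. -/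
def Kset (C : X → Set (ProbabilityMeasure (IPath X)))
    (P : ProbabilityMeasure (IPath X)) (s : ℝ≥0) :
    Set (ProbabilityMeasure (IPath X)) :=
  {Q | ∀ f : BoundedContinuousFunction (IPath X) ℝ,
    intBCF f Q ≤ ∫ w, hSupp C (w s) f ∂(P : Measure (IPath X))}

/-- The set `V_η[K]` of maximizers of `η` over `K`. -/
def Vmax {α : Type*} (η : α → ℝ) (K : Set α) : Set α :=
  {P ∈ K | ∀ Q ∈ K, η Q ≤ η P}

open Filter Topology in
lemma aux_cont (f : BoundedContinuousFunction (IPath X) ℝ) : Continuous (intBCF f) :=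
  ProbabilityMeasure.continuous_integral_boundedContinuousFunction f

lemma aux_abs (f : BoundedContinuousFunction (IPath X) ℝ) [TopologicalSpace.PseudoMetrizableSpace (IPath X)]
    (Q : ProbabilityMeasure (IPath X)) : |intBCF f Q| ≤ ‖f‖ := by
  have := BoundedContinuousFunction.norm_integral_le_norm (Q : Measure (IPath X)) f
  simpa [intBCF] using this

lemma aux_lin [PolishSpace X] (f g : BoundedContinuousFunction (IPath X) ℝ) (c : ℝ)
    (Q : ProbabilityMeasure (IPath X)) :
    intBCF (f + c • g) Q = intBCF f Q + c * intBCF g Q := by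
  have h1 := BoundedContinuousFunction.integrable (Q : Measure (IPath X)) f
  have h2 := BoundedContinuousFunction.integrable (Q : Measure (IPath X)) g
  simp only [intBCF, BoundedContinuousFunction.coe_add, BoundedContinuousFunction.coe_smul,
    Pi.add_apply, smul_eq_mul]
  rw [integral_add h1 (h2.const_mul c), integral_const_mul]

/-- good multifunctions -/
structure GoodMF [MeasurableSpace X] (C : X → Set (ProbabilityMeasure (IPath X))) : Prop where
  ne : ∀ x, (C x).Nonempty
  cpt : ∀ x, IsCompact (C x)
  meas : ∀ f, Measurable (fun x => hSupp C x f)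

lemma aux_le [MeasurableSpace X] {C : X → Set (ProbabilityMeasure (IPath X))} (hC : GoodMF C)
    {x : X} (f) {Q} (hQ : Q ∈ C x) : intBCF f Q ≤ hSupp C x f :=
  le_csSup ((hC.cpt x).image (aux_cont f)).bddAbove ⟨Q, hQ, rfl⟩

lemma aux_att [MeasurableSpace X] {C : X → Set (ProbabilityMeasure (IPath X))} (hC : GoodMF C)
    (x : X) (f) : ∃ Q ∈ C x, intBCF f Q = hSupp C x f :=
  ((hC.cpt x).image (aux_cont f)).sSup_mem ((hC.ne x).image _)

lemma aux_habs [PolishSpace X] [MeasurableSpace X] {C : X → Set (ProbabilityMeasure (IPath X))}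
    (hC : GoodMF C) (x : X) (f) : |hSupp C x f| ≤ ‖f‖ := by
  obtain ⟨Q, -, h⟩ := aux_att hC x f
  rw [← h]; exact aux_abs f Q

lemma aux_mem_V [MeasurableSpace X] {C : X → Set (ProbabilityMeasure (IPath X))} (hC : GoodMF C)
    {x : X} (g) {Q} : Q ∈ Vmax (intBCF g) (C x) ↔ Q ∈ C x ∧ intBCF g Q = hSupp C x g := by
  constructor
  · rintro ⟨h, h'⟩
    refine ⟨h, le_antisymm (aux_le hC g h) ?_⟩
    obtain ⟨R, hR, e⟩ := aux_att hC x g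
    rw [← e]; exact h' R hR
  · rintro ⟨h, h'⟩
    exact ⟨h, fun R hR => h' ▸ aux_le hC g hR⟩

lemma aux_V_ne [MeasurableSpace X] {C : X → Set (ProbabilityMeasure (IPath X))} (hC : GoodMF C)
    (x : X) (g) : (Vmax (intBCF g) (C x)).Nonempty := by
  obtain ⟨R, hR, e⟩ := aux_att hC x g
  exact ⟨R, (aux_mem_V hC g).2 ⟨hR, e⟩⟩

lemma aux_V_cpt [MeasurableSpace X] {C : X → Set (ProbabilityMeasure (IPath X))} (hC : GoodMF C)
    (x : X) (g) : IsCompact (Vmax (intBCF g) (C x)) := by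
  have : Vmax (intBCF g) (C x) = C x ∩ {Q | intBCF g Q = hSupp C x g} := by
    ext Q; exact aux_mem_V hC g
  rw [this]
  exact (hC.cpt x).inter_right (isClosed_eq (aux_cont g) continuous_const)

/-- penalised support function -/
def penH (C : X → Set (ProbabilityMeasure (IPath X))) (f g : BoundedContinuousFunction (IPath X) ℝ)
    (n : ℕ) (x : X) : ℝ := hSupp C x (f + (n : ℝ) • g) - n * hSupp C x g

lemma aux_V_le_pen [PolishSpace X] [MeasurableSpace X] {C : X → Set (ProbabilityMeasure (IPath X))}
    (hC : GoodMF C) (x : X) (f g) (n : ℕ) {Q} (hQ : Q ∈ Vmax (intBCF g) (C x)) :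
    intBCF f Q ≤ penH C f g n x := by
  obtain ⟨h, h'⟩ := (aux_mem_V hC g).1 hQ
  have := aux_le hC (f + (n : ℝ) • g) h
  rw [aux_lin, h'] at this
  unfold penH; linarith

lemma aux_pen_att [PolishSpace X] [MeasurableSpace X] {C : X → Set (ProbabilityMeasure (IPath X))}
    (hC : GoodMF C) (x : X) (f g) (n : ℕ) :
    ∃ Q ∈ C x, penH C f g n x = intBCF f Q + n * (intBCF g Q - hSupp C x g) := by
  obtain ⟨Q, hQ, h⟩ := aux_att hC x (f + (n : ℝ) • g)
  refine ⟨Q, hQ, ?_⟩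
  rw [aux_lin] at h
  unfold penH; rw [← h]; ring

lemma aux_pen_abs [PolishSpace X] [MeasurableSpace X] {C : X → Set (ProbabilityMeasure (IPath X))}
    (hC : GoodMF C) (x : X) (f g) (n : ℕ) : |penH C f g n x| ≤ ‖f‖ := by
  obtain ⟨R, hR⟩ := aux_V_ne hC x g
  obtain ⟨Q, hQ, h⟩ := aux_pen_att hC x f g n
  have h1 := aux_V_le_pen hC x f g n hR
  have h2 := abs_le.1 (aux_abs f R)
  have h3 := abs_le.1 (aux_abs f Q)
  have h4 := aux_le hC g hQ
  have h5 : (n : ℝ) * (intBCF g Q - hSupp C x g) ≤ 0 :=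
    mul_nonpos_of_nonneg_of_nonpos (by positivity) (by linarith)
  exact abs_le.2 ⟨by linarith, by linarith⟩

open Filter Topology in
lemma aux_pen_tendsto [PolishSpace X] [MeasurableSpace X]
    {C : X → Set (ProbabilityMeasure (IPath X))}
    (hC : GoodMF C) (x : X) (f g) :
    Tendsto (fun n => penH C f g n x) atTop
      (𝓝 (hSupp (fun x => Vmax (intBCF g) (C x)) x f)) := by
  set L := hSupp (fun x => Vmax (intBCF g) (C x)) x f with hL
  have hbd : BddAbove (intBCF f '' Vmax (intBCF g) (C x)) :=
    ((aux_V_cpt hC x g).image (aux_cont f)).bddAbove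
  have hlow : ∀ n, L ≤ penH C f g n x := by
    intro n
    refine csSup_le ((aux_V_ne hC x g).image _) ?_
    rintro _ ⟨Q, hQ, rfl⟩
    exact aux_V_le_pen hC x f g n hQ
  refine tendsto_order.2 ⟨fun a ha => Eventually.of_forall fun n => ha.trans_le (hlow n), ?_⟩
  intro a ha
  by_contra hcon
  rw [not_eventually] at hcon
  set T : ℕ → Set (ProbabilityMeasure (IPath X)) := fun n =>
    C x ∩ {Q | a ≤ intBCF f Q + n * (intBCF g Q - hSupp C x g)} with hT
  have hTc : ∀ n, IsCompact (T n) := fun n => (hC.cpt x).inter_right <|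
    isClosed_le continuous_const ((aux_cont f).add
      (continuous_const.mul ((aux_cont g).sub continuous_const)))
  have hmono : ∀ n m : ℕ, n ≤ m → T m ⊆ T n := by
    rintro n m hnm Q ⟨hQ, hQ'⟩
    refine ⟨hQ, ?_⟩
    have h4 := aux_le hC g hQ
    have hnm' : (n : ℝ) ≤ m := by exact_mod_cast hnm
    simp only [mem_ofPred_eq] at hQ' ⊢
    nlinarith
  have hne : ∀ n, (T n).Nonempty := by
    intro n
    obtain ⟨m, hnm, hm⟩ := (frequently_atTop.1 hcon) n
    obtain ⟨Q, hQ, h⟩ := aux_pen_att hC x f g m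
    refine ⟨Q, hmono n m hnm ⟨hQ, ?_⟩⟩
    simp only [mem_ofPred_eq]
    rw [← h]; exact not_lt.1 hm
  obtain ⟨Q, hQ⟩ := IsCompact.nonempty_iInter_of_sequence_nonempty_isCompact_isClosed T
    (fun i => hmono _ _ (Nat.le_succ i)) hne (hTc 0) (fun i => (hTc i).isClosed)
  rw [mem_iInter] at hQ
  have hQC : Q ∈ C x := (hQ 0).1
  have hle := aux_le hC g hQC
  have heq : intBCF g Q = hSupp C x g := by
    by_contra hne'
    have hlt : 0 < hSupp C x g - intBCF g Q := by
      have := lt_of_le_of_ne hle hne'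
      linarith
    obtain ⟨n, hn⟩ := exists_nat_gt ((intBCF f Q - a) / (hSupp C x g - intBCF g Q))
    rw [div_lt_iff₀ hlt] at hn
    have := (hQ n).2
    simp only [mem_ofPred_eq] at this
    nlinarith
  have h0 := (hQ 0).2
  simp only [mem_ofPred_eq, Nat.cast_zero, zero_mul, add_zero] at h0
  have : intBCF f Q ≤ L := le_csSup hbd ⟨Q, (aux_mem_V hC g).2 ⟨hQC, heq⟩, rfl⟩
  linarith

lemma aux_pen_meas [MeasurableSpace X] {C : X → Set (ProbabilityMeasure (IPath X))}
    (hC : GoodMF C) (f g) (n : ℕ) : Measurable (penH C f g n) :=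
  (hC.meas _).sub ((hC.meas g).const_mul _)

lemma aux_V_good [PolishSpace X] [MeasurableSpace X]
    {C : X → Set (ProbabilityMeasure (IPath X))} (hC : GoodMF C) (g) :
    GoodMF (fun x => Vmax (intBCF g) (C x)) where
  ne x := aux_V_ne hC x g
  cpt x := aux_V_cpt hC x g
  meas f := measurable_of_tendsto_metrizable (fun n => aux_pen_meas hC f g n)
    (tendsto_pi_nhds.2 fun x => aux_pen_tendsto hC x f g)

lemma aux_good [PolishSpace X] [MeasurableSpace X]
    (C : X → Set (ProbabilityMeasure (IPath X)))
    (hC1 : ∀ x, (C x).Nonempty ∧ IsCompact (C x))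
    (hC2 : ∀ K : Set (ProbabilityMeasure (IPath X)), IsClosed K →
      MeasurableSet {x | (C x ∩ K).Nonempty}) : GoodMF C where
  ne x := (hC1 x).1
  cpt x := (hC1 x).2
  meas f := by
    refine measurable_of_Ici fun a => ?_
    convert hC2 {Q | a ≤ intBCF f Q} (isClosed_le continuous_const (aux_cont f)) using 1
    ext x
    have hc := ((hC1 x).2.image (aux_cont f))
    constructor
    · intro h
      obtain ⟨Q, hQ, e⟩ := hc.sSup_mem ((hC1 x).1.image _)
      refine ⟨Q, hQ, ?_⟩
      simp only [mem_ofPred_eq]; rw [e]; exact h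
    · rintro ⟨Q, hQ, h⟩
      exact le_trans h (le_csSup hc.bddAbove ⟨Q, hQ, rfl⟩)

lemma aux_pi (Y : Type*) [TopologicalSpace Y] [SecondCountableTopology Y] :
    ∃ e : ℕ → Set Y, (∀ i, IsClosed (e i)) ∧ IsPiSystem (range e) ∧
      borel Y = MeasurableSpace.generateFrom (range e) := by
  obtain ⟨B, hBc, -, hB⟩ := TopologicalSpace.exists_countable_basis Y
  set B' : Set (Set Y) := compl '' B with hB'
  have hB'cl : ∀ s ∈ B', IsClosed s := by
    rintro _ ⟨s, hs, rfl⟩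
    exact (hB.isOpen hs).isClosed_compl
  set S : Set (Set Y) := sInter '' {t | t.Finite ∧ t ⊆ B'} with hS
  have hScl : ∀ s ∈ S, IsClosed s := by
    rintro _ ⟨t, ht, rfl⟩
    exact isClosed_sInter fun s hs => hB'cl s (ht.2 hs)
  have hSc : S.Countable := (Set.countable_ofPred_finite_subset (hBc.image _)).image _
  have hSne : S.Nonempty := ⟨_, ∅, ⟨finite_empty, empty_subset _⟩, rfl⟩
  obtain ⟨e, he⟩ := hSc.exists_eq_range hSne
  refine ⟨e, fun i => hScl _ (he ▸ mem_range_self i), ?_, ?_⟩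
  · rw [← he]
    rintro _ ⟨t, ht, rfl⟩ _ ⟨u, hu, rfl⟩ -
    exact ⟨t ∪ u, ⟨ht.1.union hu.1, union_subset ht.2 hu.2⟩, sInter_union t u⟩
  · rw [← he]
    apply le_antisymm
    · rw [hB.borel_eq_generateFrom]
      refine MeasurableSpace.generateFrom_le fun s hs => ?_
      have : MeasurableSet[MeasurableSpace.generateFrom S] sᶜ := by
        refine MeasurableSpace.measurableSet_generateFrom ⟨{sᶜ}, ⟨finite_singleton _, ?_⟩, by simp⟩
        rintro _ rfl
        exact ⟨s, hs, rfl⟩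
      simpa using this.compl
    · refine MeasurableSpace.generateFrom_le fun s hs => ?_
      have hc := hScl s hs
      borelize Y
      exact hc.measurableSet

/-- iterated lexicographic maximisation -/
def lexD (C : X → Set (ProbabilityMeasure (IPath X)))
    (F : ℕ → BoundedContinuousFunction (IPath X) ℝ) : ℕ → X → Set (ProbabilityMeasure (IPath X))
  | 0 => C
  | k + 1 => fun x => Vmax (intBCF (F k)) (lexD C F k x)

lemma aux_lex_good [PolishSpace X] [MeasurableSpace X]
    {C : X → Set (ProbabilityMeasure (IPath X))} (hC : GoodMF C) (F) (k : ℕ) :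
    GoodMF (lexD C F k) := by
  induction k with
  | zero => exact hC
  | succ k ih => exact aux_V_good ih (F k)

lemma aux_lex_sel [PolishSpace X] [MeasurableSpace X]
    {C : X → Set (ProbabilityMeasure (IPath X))} (hC : GoodMF C)
    (F : ℕ → BoundedContinuousFunction (IPath X) ℝ) :
    ∃ q : X → ProbabilityMeasure (IPath X), (∀ x, q x ∈ C x) ∧
      ∀ k, Measurable (fun x => intBCF (F k) (q x)) := by
  have hg := aux_lex_good hC F
  have h : ∀ x, (⋂ k, lexD C F k x).Nonempty := fun x =>
    IsCompact.nonempty_iInter_of_sequence_nonempty_isCompact_isClosed (fun k => lexD C F k x)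
      (fun i Q hQ => hQ.1) (fun i => (hg i).ne x) ((hg 0).cpt x)
      (fun i => ((hg i).cpt x).isClosed)
  choose q hq using h
  simp only [mem_iInter] at hq
  refine ⟨q, fun x => hq x 0, fun k => ?_⟩
  convert (hg k).meas (F k) using 2 with x
  exact ((aux_mem_V (hg k) (F k)).1 (hq x (k + 1))).2

lemma aux_sel [PolishSpace X] [MeasurableSpace X]
    {C : X → Set (ProbabilityMeasure (IPath X))} (hC : GoodMF C) :
    ∃ q : X → ProbabilityMeasure (IPath X), (∀ x, q x ∈ C x) ∧
      Measurable (fun x => (q x : Measure (IPath X))) := by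
  obtain ⟨e, hcl, hpi, hgen⟩ := aux_pi (IPath X)
  obtain ⟨q, hq, hm⟩ := aux_lex_sel hC (fun k => BoundedContinuousFunction.comp _
    NNReal.isometry_coe.lipschitz ((hcl k.unpair.1).apprSeq k.unpair.2))
  refine ⟨q, hq, ?_⟩
  refine Measurable.measure_of_isPiSystem_of_isProbabilityMeasure hgen hpi ?_
  rintro _ ⟨i, rfl⟩
  refine measurable_of_tendsto_metrizable (f := fun n x =>
    ∫⁻ w, (hcl i).apprSeq n w ∂(q x : Measure (IPath X))) ?_
    (tendsto_pi_nhds.2 fun x =>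
      HasOuterApproxClosed.tendsto_lintegral_apprSeq (hcl i) (q x : Measure (IPath X)))
  intro n
  have := (hm (Nat.pair i n)).ennreal_ofReal
  convert this using 2 with x
  simp only [Nat.unpair_pair, intBCF]
  rw [ofReal_integral_eq_lintegral_ofReal (BoundedContinuousFunction.integrable _ _)
    (Filter.Eventually.of_forall fun w => NNReal.coe_nonneg _)]
  simp

lemma aux_eval_meas [PolishSpace X] [MeasurableSpace X] [BorelSpace X] (s : ℝ≥0) :
    Measurable (fun w : IPath X => w s) :=
  (continuous_eval_const s).measurable

lemma aux_h_int [PolishSpace X] [MeasurableSpace X] [BorelSpace X]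
    {C : X → Set (ProbabilityMeasure (IPath X))} (hC : GoodMF C)
    (P : ProbabilityMeasure (IPath X)) (s : ℝ≥0) (f) :
    Integrable (fun w : IPath X => hSupp C (w s) f) (P : Measure (IPath X)) :=
  Integrable.of_bound ((hC.meas f).comp (aux_eval_meas s)).aestronglyMeasurable ‖f‖
    (Filter.Eventually.of_forall fun w => aux_habs hC (w s) f)

open ProbabilityTheory in
lemma aux_K_ne [PolishSpace X] [MeasurableSpace X] [BorelSpace X]
    {C : X → Set (ProbabilityMeasure (IPath X))} (hC : GoodMF C)
    (P : ProbabilityMeasure (IPath X)) (s : ℝ≥0) : (Kset C P s).Nonempty := by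
  obtain ⟨q, hq, hm⟩ := aux_sel hC
  let κ : Kernel (IPath X) (IPath X) := ⟨fun w => (q (w s) : Measure (IPath X)),
    hm.comp (aux_eval_meas s)⟩
  have : IsMarkovKernel κ := ⟨fun w => (q (w s)).2⟩
  let ι : Kernel Unit (IPath X) := Kernel.const Unit (P : Measure (IPath X))
  refine ⟨⟨(κ ∘ₖ ι) (), inferInstance⟩, fun f => ?_⟩
  have hf : Integrable f ((κ ∘ₖ ι) ()) := BoundedContinuousFunction.integrable _ _
  have h := Kernel.integral_comp hf
  have h2 := hf.integral_comp
  simp only [intBCF, ProbabilityMeasure.coe_mk]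
  rw [h]
  exact integral_mono h2 (aux_h_int hC P s f) fun w => aux_le hC f (hq (w s))

lemma aux_mix [PolishSpace X] (P Q : ProbabilityMeasure (IPath X)) (a b : ℝ≥0) (hab : a + b = 1) :
    ∃ R : ProbabilityMeasure (IPath X),
      (R : Measure (IPath X)) = a • (P : Measure (IPath X)) + b • (Q : Measure (IPath X)) ∧
      ∀ f, intBCF f R = a * intBCF f P + b * intBCF f Q := by
  have hp : IsProbabilityMeasure
      (a • (P : Measure (IPath X)) + b • (Q : Measure (IPath X))) := by
    constructor
    have h1 : ∀ (c : ℝ≥0) (R : ProbabilityMeasure (IPath X)),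
        (c • (R : Measure (IPath X))) univ = c := fun c R => by
      rw [Measure.smul_apply, measure_univ, ENNReal.smul_def, smul_eq_mul, mul_one]
    rw [Measure.add_apply, h1, h1]
    exact_mod_cast hab
  refine ⟨⟨_, hp⟩, rfl, fun f => ?_⟩
  simp only [intBCF, ProbabilityMeasure.coe_mk]
  rw [integral_add_measure (BoundedContinuousFunction.integrable _ _)
    (BoundedContinuousFunction.integrable _ _), integral_smul_nnreal_measure,
    integral_smul_nnreal_measure]
  rfl

lemma aux_dirac [PolishSpace X] (f : BoundedContinuousFunction (IPath X) ℝ) (w : IPath X) :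
    intBCF f (diracProba w) = f w := by
  simp [intBCF, diracProba]

/-- affine functional -/
def AffF (η : ProbabilityMeasure (IPath X) → ℝ) : Prop :=
  ∀ P Q : ProbabilityMeasure (IPath X), ∀ a b : ℝ≥0, a + b = 1 →
      ∀ R : ProbabilityMeasure (IPath X),
        (R : Measure (IPath X)) = a • (P : Measure (IPath X)) + b • (Q : Measure (IPath X)) →
          η R = (a : ℝ) * η P + (b : ℝ) * η Q

open Filter Topology in
lemma aux_bdd [PolishSpace X] (η : ProbabilityMeasure (IPath X) → ℝ)
    (hc : Continuous η) (hl : AffF η) : ∃ M, ∀ w, |η (diracProba w)| ≤ M := by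
  by_contra! hcon
  obtain ⟨w0, -⟩ := hcon 0
  choose w hw using fun n : ℕ => hcon ((n : ℝ) + 1)
  have hpos : ∀ n, 1 < |η (diracProba (w n))| := fun n =>
    lt_of_le_of_lt (by linarith [(Nat.cast_nonneg n : (0:ℝ) ≤ n)]) (hw n)
  let ε : ℕ → ℝ≥0 := fun n => ⟨|η (diracProba (w n))|⁻¹, by positivity⟩
  have hεv : ∀ n, (ε n : ℝ) = |η (diracProba (w n))|⁻¹ := fun n => rfl
  have hε1 : ∀ n, ε n ≤ 1 := fun n => by
    rw [← NNReal.coe_le_coe, hεv]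
    exact inv_le_one_of_one_le₀ (hpos n).le
  have hε0 : Tendsto (fun n => (ε n : ℝ)) atTop (𝓝 0) := by
    refine squeeze_zero (fun n => (ε n).2) (fun n => ?_) tendsto_one_div_add_atTop_nhds_zero_nat
    rw [hεv, one_div]
    exact inv_anti₀ (by positivity) (hw n).le
  choose R hR hRf using fun n => aux_mix (diracProba w0) (diracProba (w n)) (1 - ε n) (ε n)
    (tsub_add_cancel_of_le (hε1 n))
  have hcoe : ∀ n, ((1 - ε n : ℝ≥0) : ℝ) = 1 - ε n := fun n => by
    rw [NNReal.coe_sub (hε1 n)]; rfl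
  have h1 : Tendsto (fun n => (1 : ℝ) - ε n) atTop (𝓝 1) := by
    simpa using tendsto_const_nhds.sub hε0
  have hRt : Tendsto R atTop (𝓝 (diracProba w0)) := by
    rw [ProbabilityMeasure.tendsto_iff_forall_integral_tendsto]
    intro f
    change Tendsto (fun n => intBCF f (R n)) atTop (𝓝 (intBCF f (diracProba w0)))
    simp only [hRf, hcoe]
    have h2 : Tendsto (fun n => (ε n : ℝ) * intBCF f (diracProba (w n))) atTop (𝓝 0) := by
      refine squeeze_zero_norm (a := fun n => (ε n : ℝ) * ‖f‖) (fun n => ?_) (by simpa using hε0.mul_const ‖f‖)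
      rw [norm_mul, Real.norm_eq_abs, Real.norm_eq_abs, abs_of_nonneg (NNReal.coe_nonneg (ε n))]
      exact mul_le_mul_of_nonneg_left (aux_abs f _) (ε n).2
    simpa using (h1.mul_const (intBCF f (diracProba w0))).add h2
  have h3 := (hc.tendsto _).comp hRt
  have h4 : ∀ n, (η ∘ R) n = (1 - (ε n : ℝ)) * η (diracProba w0) + ε n * η (diracProba (w n)) := by
    intro n
    have := hl _ _ _ _ (tsub_add_cancel_of_le (hε1 n)) _ (hR n)
    rw [hcoe] at this
    exact this
  have h5 : Tendsto (fun n => |(ε n : ℝ) * η (diracProba (w n))|) atTop (𝓝 0) := by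
    have := (h3.sub (h1.mul_const (η (diracProba w0)))).abs
    rw [one_mul, sub_self, abs_zero] at this
    refine this.congr fun n => ?_
    rw [h4, add_sub_cancel_left]
  have h6 : ∀ n, |(ε n : ℝ) * η (diracProba (w n))| = 1 := by
    intro n
    rw [abs_mul, abs_of_nonneg (NNReal.coe_nonneg (ε n)), hεv]
    exact inv_mul_cancel₀ (by linarith [hpos n])
  simp only [h6] at h5
  exact one_ne_zero (tendsto_nhds_unique tendsto_const_nhds h5)

lemma aux_simple [PolishSpace X] (η : ProbabilityMeasure (IPath X) → ℝ) (hl : AffF η)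
    (g : BoundedContinuousFunction (IPath X) ℝ) (hg : ∀ w, g w = η (diracProba w))
    (P : ProbabilityMeasure (IPath X)) (φ : SimpleFunc (IPath X) (IPath X)) :
    η (P.map φ.measurable.aemeasurable) = intBCF g (P.map φ.measurable.aemeasurable) := by
  let T : ProbabilityMeasure (IPath X) → (BoundedContinuousFunction (IPath X) ℝ → ℝ) × ℝ :=
    fun R => (fun f => intBCF f R, η R)
  have hconv : Convex ℝ (range T) := by
    rintro _ ⟨R1, rfl⟩ _ ⟨R2, rfl⟩ a b ha hb hab
    lift a to ℝ≥0 using ha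
    lift b to ℝ≥0 using hb
    have hab' : a + b = 1 := by exact_mod_cast hab
    obtain ⟨R, hR, hRf⟩ := aux_mix R1 R2 a b hab'
    refine ⟨R, Prod.ext (funext fun f => ?_) ?_⟩
    · exact hRf f
    · exact hl _ _ _ _ hab' _ hR
  have hint : ∀ f : BoundedContinuousFunction (IPath X) ℝ,
      intBCF f (P.map φ.measurable.aemeasurable) =
      ∑ y ∈ φ.range, (P : Measure (IPath X)).real (φ ⁻¹' {y}) * f y := by
    intro f
    simp only [intBCF, ProbabilityMeasure.toMeasure_map]
    rw [integral_map φ.measurable.aemeasurable f.continuous.aestronglyMeasurable]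
    have h1 : ∀ w, f (φ w) = ∑ y ∈ φ.range, (φ ⁻¹' {y}).indicator (fun _ => f y) w := by
      intro w
      rw [Finset.sum_eq_single (φ w)]
      · simp
      · intro y _ hy
        exact indicator_of_notMem (fun h => hy h.symm) _
      · intro h
        exact absurd (φ.mem_range_self w) h
    simp only [h1]
    rw [integral_finsetSum _ fun y _ =>
      (integrable_const (f y)).indicator (φ.measurableSet_fiber y)]
    refine Finset.sum_congr rfl fun y _ => ?_
    rw [integral_indicator_const _ (φ.measurableSet_fiber y), smul_eq_mul]
  have hmem : ∑ y ∈ φ.range, (P : Measure (IPath X)).real (φ ⁻¹' {y}) • T (diracProba y)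
      ∈ range T := by
    refine hconv.sum_mem (fun _ _ => measureReal_nonneg) ?_ (fun y _ => mem_range_self _)
    have := hint (BoundedContinuousFunction.const _ 1)
    have h1 : intBCF (BoundedContinuousFunction.const (IPath X) (1 : ℝ))
        (P.map φ.measurable.aemeasurable) = 1 := by
      simp only [intBCF, BoundedContinuousFunction.const_apply, integral_const, probReal_univ,
        smul_eq_mul, mul_one]
    rw [h1] at this
    simpa using this.symm
  obtain ⟨R, hR⟩ := hmem
  have hR1 : ∀ f, intBCF f R = intBCF f (P.map φ.measurable.aemeasurable) := by
    intro f
    have := congrFun (congrArg Prod.fst hR) f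
    rw [hint f]
    simpa [T, Prod.fst_sum, Finset.sum_apply, aux_dirac] using this
  have hR2 : η R = intBCF g (P.map φ.measurable.aemeasurable) := by
    have := congrArg Prod.snd hR
    rw [hint g]
    simpa [T, Prod.snd_sum, hg] using this
  have : R = P.map φ.measurable.aemeasurable := by
    apply Subtype.ext
    have : IsProbabilityMeasure (R.1) := R.2
    have : IsProbabilityMeasure ((P.map φ.measurable.aemeasurable).1) :=
      (P.map φ.measurable.aemeasurable).2
    exact ext_of_forall_integral_eq_of_IsFiniteMeasure hR1
  rw [← this, hR2, this]

open Filter Topology in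
lemma aux_rep [PolishSpace X] (η : ProbabilityMeasure (IPath X) → ℝ)
    (hc : Continuous η) (hl : AffF η) : ∃ g, η = intBCF g := by
  obtain ⟨M, hM⟩ := aux_bdd η hc hl
  let g : BoundedContinuousFunction (IPath X) ℝ :=
    BoundedContinuousFunction.ofNormedAddCommGroup (fun w => η (diracProba w))
      (hc.comp continuous_diracProba) M hM
  refine ⟨g, funext fun P => ?_⟩
  let _ := TopologicalSpace.pseudoMetrizableSpacePseudoMetric (IPath X)
  obtain ⟨w0⟩ : Nonempty (IPath X) := P.nonempty
  let φ : ℕ → SimpleFunc (IPath X) (IPath X) :=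
    SimpleFunc.approxOn id measurable_id univ w0 (mem_univ _)
  have hφ : ∀ w, Tendsto (fun n => φ n w) atTop (𝓝 w) := fun w =>
    SimpleFunc.tendsto_approxOn measurable_id (mem_univ w0) (by simp)
  have ht : Tendsto (fun n => P.map (φ n).measurable.aemeasurable) atTop (𝓝 P) := by
    rw [ProbabilityMeasure.tendsto_iff_forall_integral_tendsto]
    intro f
    have : ∀ n, ∫ w, f w ∂(P.map (φ n).measurable.aemeasurable : Measure (IPath X))
        = ∫ w, f (φ n w) ∂(P : Measure (IPath X)) := fun n => by
      rw [ProbabilityMeasure.toMeasure_map]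
      exact integral_map (φ n).measurable.aemeasurable f.continuous.aestronglyMeasurable
    simp only [this]
    refine tendsto_integral_of_dominated_convergence (fun _ => ‖f‖)
      (fun n => (f.continuous.measurable.comp (φ n).measurable).aestronglyMeasurable)
      (integrable_const _) (fun n => Eventually.of_forall fun w => f.norm_coe_le_norm _)
      (Eventually.of_forall fun w => (f.continuous.tendsto w).comp (hφ w))
  have h1 := (hc.tendsto P).comp ht
  have h2 := ((aux_cont g).tendsto P).comp ht
  refine tendsto_nhds_unique h1 (h2.congr fun n => ?_)
  exact (aux_simple η hl g (fun w => rfl) P (φ n)).symm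

/-- **The maximization operation commutes with `K(P, s, ·)`:**
`V_η[K(P, s, 𝒞)] = K(P, s, V_η[𝒞])` for every continuous linear functional `η`
on the space of probability measures. -/
theorem Vmax_Kset_comm
    {X : Type*} [TopologicalSpace X] [PolishSpace X] [MeasurableSpace X] [BorelSpace X]
    (C : X → Set (ProbabilityMeasure (IPath X)))
    (hC1 : ∀ x, (C x).Nonempty ∧ IsCompact (C x) ∧ ConvexMeasSet (C x))
    (hC2 : ∀ K : Set (ProbabilityMeasure (IPath X)), IsClosed K →
      MeasurableSet {x | (C x ∩ K).Nonempty})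
    (η : ProbabilityMeasure (IPath X) → ℝ)
    (hηcont : Continuous η)
    (hηlin : ∀ P Q : ProbabilityMeasure (IPath X), ∀ a b : ℝ≥0, a + b = 1 →
      ∀ R : ProbabilityMeasure (IPath X),
        (R : Measure (IPath X)) = a • (P : Measure (IPath X)) + b • (Q : Measure (IPath X)) →
          η R = (a : ℝ) * η P + (b : ℝ) * η Q)
    (P : ProbabilityMeasure (IPath X)) (s : ℝ≥0) :
    Vmax η (Kset C P s) = Kset (fun x => Vmax η (C x)) P s := by
  have hC : GoodMF C := aux_good C (fun x => ⟨(hC1 x).1, (hC1 x).2.1⟩) hC2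
  obtain ⟨g, rfl⟩ := aux_rep η hηcont hηlin
  have hV := aux_V_good hC g
  set M : ℝ := ∫ w, hSupp C (w s) g ∂(P : Measure (IPath X)) with hM
  have hsub : Kset (fun x => Vmax (intBCF g) (C x)) P s ⊆ Kset C P s := by
    intro Q hQ f
    refine (hQ f).trans (integral_mono (aux_h_int hV P s f) (aux_h_int hC P s f) fun w => ?_)
    obtain ⟨R, hR, e⟩ := aux_att hV (w s) f
    have : intBCF f R ≤ hSupp C (w s) f := aux_le hC f hR.1
    rw [e] at this
    exact this
  have hval : ∀ Q ∈ Kset (fun x => Vmax (intBCF g) (C x)) P s, M ≤ intBCF g Q := by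
    intro Q hQ
    have h := hQ ((0 : BoundedContinuousFunction (IPath X) ℝ) + (-1 : ℝ) • g)
    rw [aux_lin] at h
    have h0 : intBCF (0 : BoundedContinuousFunction (IPath X) ℝ) Q = 0 := by simp [intBCF]
    have h2 : (∫ w, hSupp (fun x => Vmax (intBCF g) (C x)) (w s)
        ((0 : BoundedContinuousFunction (IPath X) ℝ) + (-1 : ℝ) • g) ∂(P : Measure (IPath X)))
        = -M := by
      rw [hM, ← integral_neg]
      refine integral_congr_ae (Filter.Eventually.of_forall fun w => ?_)
      obtain ⟨R, hR, e⟩ := aux_att hV (w s)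
        ((0 : BoundedContinuousFunction (IPath X) ℝ) + (-1 : ℝ) • g)
      have h3 := ((aux_mem_V hC g).1 hR).2
      rw [aux_lin, h3] at e
      have h0 : intBCF (0 : BoundedContinuousFunction (IPath X) ℝ) R = 0 := by simp [intBCF]
      simp only
      rw [← e, h0]; ring
    rw [h2, h0] at h
    linarith
  apply Subset.antisymm
  · rintro Q ⟨hQ, hmax⟩ f
    obtain ⟨Q', hQ'⟩ := aux_K_ne hV P s
    have hQM : M ≤ intBCF g Q := (hval Q' hQ').trans (hmax Q' (hsub hQ'))
    have hn : ∀ n : ℕ, intBCF f Q ≤ ∫ w, penH C f g n (w s) ∂(P : Measure (IPath X)) := by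
      intro n
      have h := hQ (f + (n : ℝ) • g)
      rw [aux_lin] at h
      unfold penH
      rw [integral_sub (aux_h_int hC P s _) ((aux_h_int hC P s g).const_mul _),
        integral_const_mul]
      have : (n : ℝ) * M ≤ n * intBCF g Q := mul_le_mul_of_nonneg_left hQM (by positivity)
      linarith
    refine ge_of_tendsto' (tendsto_integral_of_dominated_convergence (fun _ => ‖f‖)
      (fun n => ((aux_pen_meas hC f g n).comp (aux_eval_meas s)).aestronglyMeasurable)
      (integrable_const _) (fun n => Filter.Eventually.of_forall fun w => ?_)
      (Filter.Eventually.of_forall fun w => aux_pen_tendsto hC (w s) f g)) hn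
    exact aux_pen_abs hC (w s) f g n
  · intro Q hQ
    exact ⟨hsub hQ, fun Q' hQ' => (hQ' g).trans (hval Q hQ)⟩
end
end
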